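/- Let q be an odd prime power and k a positive integer. For every ε > 0 there exists N = N(ε) such that for all n ≥ N and every finitely supported function F: Φ → ℕ with Σ_{f∈Φ} d(f)F(f) = n, the proportion of μ ∈ 𝔛_n satisfying |μ(f)| = F(f) for all f ∈ Φ and v_2(d_μ) < v_2((n)_k) among all μ ∈ 𝔛_n with |μ(f)| = F(f) for all f ∈ Φ is less than ε. Here (n)_k = n!/(n−k)! denotes the falling factorial. -/

import Mathlib

/-- The `i`-th part (0-indexed, parts in weakly decreasing order) of the partition whose
multiset of parts is `lam`; `0` if `i` is at least the number of parts. -/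
def partNth (lam : Multiset ℕ) (i : ℕ) : ℕ :=
  ((lam.sort (· ≤ ·)).reverse.getD i 0)

/-- The `j`-th part (0-indexed) of the conjugate partition: the number of parts `> j`. -/
def conjNth (lam : Multiset ℕ) (j : ℕ) : ℕ :=
  (lam.filter (fun m => j < m)).card

/-- The cells `(i, j)` (0-indexed) of the Young diagram of `lam`. -/
def cellsOf (lam : Multiset ℕ) : Finset (ℕ × ℕ) :=
  (Finset.range (Multiset.card lam) ×ˢ Finset.range lam.sum).filter
    (fun c => c.2 < partNth lam c.1)

/-- The hook length of the cell `c = (i, j)` of `lam`: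
`(λᵢ − j) + (λ'ⱼ − i) − 1`. -/
def hookLen (lam : Multiset ℕ) (c : ℕ × ℕ) : ℕ :=
  (partNth lam c.1 - c.2) + (conjNth lam c.2 - c.1) - 1

/-- The product of all hook lengths of `lam`. -/
def hookProd (lam : Multiset ℕ) : ℕ :=
  ∏ c ∈ cellsOf lam, hookLen lam c

/-- `α(λ) = Σᵢ (i − 1)·λᵢ` (1-indexed), i.e. `Σᵢ i·λᵢ` for the 0-indexed parts. -/
def alphaStat (lam : Multiset ℕ) : ℕ :=
  ∑ i ∈ Finset.range (Multiset.card lam), i * partNth lam i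

/-- `𝔣_λ = n! / ∏_{h ∈ H(λ)} |h|`, the degree of the irreducible character of `S_n`
indexed by `λ`, as a rational number. -/
def fDeg (lam : Multiset ℕ) : ℚ :=
  (Nat.factorial lam.sum : ℚ) / (hookProd lam : ℚ)

/-- `d_λ(x) = x^{α(λ)} · ∏_{i=1}^{n} (x^i − 1) / ∏_{h ∈ H(λ)} (x^{|h|} − 1)`. -/
def dDeg (lam : Multiset ℕ) (x : ℕ) : ℚ :=
  (x : ℚ) ^ alphaStat lam * (∏ i ∈ Finset.Icc 1 lam.sum, ((x : ℚ) ^ i - 1)) /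
    ∏ c ∈ cellsOf lam, ((x : ℚ) ^ hookLen lam c - 1)
/-- `μ` is a member of `𝔛_n`: a finitely supported assignment of a partition (given by its
multiset of positive parts) to each monic irreducible polynomial `f ≠ x` over `F`, such that
`Σ_f |μ(f)|·deg f = n`. -/
def IsXn (F : Type*) [Field F] (n : ℕ) (μ : Polynomial F →₀ Multiset ℕ) : Prop :=
  (∀ f ∈ μ.support, f.Monic ∧ Irreducible f ∧ f ≠ Polynomial.X) ∧
  (∀ f : Polynomial F, ∀ m ∈ μ f, 0 < m) ∧
  (μ.sum fun f lam => lam.sum * f.natDegree) = n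

/-- `a_μ = ∏_{i=1}^{n} (q^i − 1) / ∏_{f ∈ Φ} ∏_{i=1}^{|μ(f)|} (q^{d(f)·i} − 1)`. -/
noncomputable def aMu (q : ℕ) {F : Type*} [Field F] (n : ℕ)
    (μ : Polynomial F →₀ Multiset ℕ) : ℚ :=
  (∏ i ∈ Finset.Icc 1 n, ((q : ℚ) ^ i - 1)) /
    ∏ f ∈ μ.support, ∏ i ∈ Finset.Icc 1 (μ f).sum, ((q : ℚ) ^ (f.natDegree * i) - 1)

/-- `ψ_m(x) = ∏_{i=1}^{m} (x^i − 1)`. -/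
def psiPoly (m : ℕ) (x : ℚ) : ℚ := ∏ i ∈ Finset.Icc 1 m, (x ^ i - 1)

/-- `H(λ, x) = x^{α(λ)} / ∏_{h ∈ H(λ)} (x^{|h|} − 1)`. -/
def hFactor (lam : Multiset ℕ) (x : ℚ) : ℚ :=
  x ^ alphaStat lam / ∏ c ∈ cellsOf lam, (x ^ hookLen lam c - 1)

/-- `d_μ = ψ_n(q) · ∏_{f ∈ Φ} H(μ(f), q^{d(f)})`, the degree of the irreducible character of
`GL(n, q)` indexed by `μ`, as a rational number. -/
noncomputable def dMu (q : ℕ) {F : Type*} [Field F] (n : ℕ)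
    (μ : Polynomial F →₀ Multiset ℕ) : ℚ :=
  psiPoly n (q : ℚ) * ∏ f ∈ μ.support, hFactor (μ f) ((q : ℚ) ^ f.natDegree)

/-!
For odd `q`, comparing the hook products with `ψ_n(q)` one prime power at a time gives
`v₂(d_μ) ≥ ∑_f ((d(f) - 1)|μ(f)| + δ(μ(f)))`, where `δ(λ) = ⌊|λ|/2⌋ - #{even hooks of λ}`, whereas
`v₂((n)_k) ≤ log₂ n + O(1)`. Hence, for large `n`, a fibre with an exceptional `μ` has a linear `f`
with `F(f) ≥ n / (2q)`, and it suffices that the partitions `λ` of `m` with `δ(λ) ≤ log₂ m + O(1)`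
form a vanishing proportion.

Let `t` be the charge of `λ` on the 2-abacus, the number of even beads minus the number of odd ones.
Then `|λ| = 2w + t(t - 1)/2` with `w` at least the number of even hooks, so `t² = O(log m)` if
`δ(λ)` is that small. Pushing up the even runner and raising the largest bead injects the partitions
of `m` of charge `t` into those of `m + 2σ` of charge `t + 4i`, for each `i < K` and `σ` polynomial
in `log m` and `K`. These images are disjoint, so charge `t` accounts for at most `p(m + 2σ)/K`
partitions. Finally `p(m + 2σ) ≤ 2p(m)`, since at least half of the partitions of `m + 2σ` have at
least `2σ` ones.
-/

/-! ### Rows, columns and hooks -/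

lemma coe_reverse_sort (lam : Multiset ℕ) :
    ((lam.sort (· ≤ ·)).reverse : Multiset ℕ) = lam := by
  rw [Multiset.coe_reverse, Multiset.sort_eq]

lemma lt_getD_iff_lt_length_filter {l : List ℕ} (hl : l.Pairwise (· ≥ ·)) (i j : ℕ) :
    j < l.getD i 0 ↔ i < (l.filter (j < ·)).length := by
  induction l generalizing i with
  | nil => simp
  | cons a l ih =>
    rw [List.pairwise_cons] at hl
    by_cases haj : j < a
    · cases i with
      | zero => simp [haj]
      | succ i => simp [haj, ← ih hl.2]
    · have hfilter : l.filter (j < ·) = [] := by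
        rw [List.filter_eq_nil_iff]
        intro b hb
        have := hl.1 b hb
        simp only [decide_eq_true_eq]
        omega
      have htail := ih hl.2
      rw [hfilter] at htail
      cases i with
      | zero => simp [haj, hfilter]
      | succ i => simpa [haj, hfilter] using htail i

lemma lt_partNth_iff_lt_conjNth (lam : Multiset ℕ) (i j : ℕ) :
    j < partNth lam i ↔ i < conjNth lam j := by
  have hsorted : (lam.sort (· ≤ ·)).reverse.Pairwise (· ≥ ·) :=
    List.pairwise_reverse.2 (Multiset.pairwise_sort lam (· ≤ ·))
  rw [partNth, lt_getD_iff_lt_length_filter hsorted, ← Multiset.coe_card, ← Multiset.filter_coe,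
    coe_reverse_sort, conjNth]

lemma partNth_antitone (lam : Multiset ℕ) : Antitone (partNth lam) := fun _ _ hii' =>
  le_of_forall_lt fun _ hj => (lt_partNth_iff_lt_conjNth ..).2
    (hii'.trans_lt ((lt_partNth_iff_lt_conjNth ..).1 hj))

lemma conjNth_antitone (lam : Multiset ℕ) : Antitone (conjNth lam) := fun _ _ hjj' =>
  le_of_forall_lt fun _ hi => (lt_partNth_iff_lt_conjNth ..).1
    (hjj'.trans_lt ((lt_partNth_iff_lt_conjNth ..).2 hi))

lemma conjNth_le_card (lam : Multiset ℕ) (j : ℕ) : conjNth lam j ≤ lam.card :=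
  Multiset.card_le_card (Multiset.filter_le _ _)

lemma partNth_eq_zero {lam : Multiset ℕ} {i : ℕ} (hi : lam.card ≤ i) : partNth lam i = 0 :=
  List.getD_eq_default _ _ (by simpa using hi)

lemma map_partNth_range_card (lam : Multiset ℕ) :
    (Multiset.range lam.card).map (partNth lam) = lam := by
  conv_rhs => rw [← coe_reverse_sort lam]
  rw [Multiset.range, Multiset.map_coe, Multiset.coe_eq_coe]
  refine List.Perm.of_eq (List.ext_getElem (by simp) fun i _ hi => ?_)
  rw [List.getElem_map, List.getElem_range, partNth, List.getD_eq_getElem _ _ hi]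

lemma filter_pos_map_partNth {lam : Multiset ℕ} (hpos : ∀ m ∈ lam, 0 < m) {L : ℕ}
    (hL : lam.card ≤ L) :
    ((Multiset.range L).map (partNth lam)).filter (0 < ·) = lam := by
  obtain ⟨s, rfl⟩ := Nat.exists_eq_add_of_le hL
  have hzero : (((Multiset.range s).map (lam.card + ·)).map (partNth lam)).filter (0 < ·) = 0 := by
    simp [partNth_eq_zero, Multiset.mem_replicate]
  rw [Multiset.range_add, Multiset.map_add, Multiset.filter_add, map_partNth_range_card,
    hzero, add_zero, Multiset.filter_eq_self.2 hpos]

lemma lt_of_mem_cellsOf {lam : Multiset ℕ} {c : ℕ × ℕ} (hc : c ∈ cellsOf lam) :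
    c.1 < lam.card ∧ c.2 < partNth lam c.1 ∧ c.1 < conjNth lam c.2 := by
  rw [cellsOf, Finset.mem_filter, Finset.mem_product, Finset.mem_range] at hc
  exact ⟨hc.1.1, hc.2, (lt_partNth_iff_lt_conjNth ..).1 hc.2⟩

lemma hookLen_pos {lam : Multiset ℕ} {c : ℕ × ℕ} (hc : c ∈ cellsOf lam) : 0 < hookLen lam c := by
  obtain ⟨-, hj, hi⟩ := lt_of_mem_cellsOf hc
  unfold hookLen
  omega

/-! ### β-sets -/

/-- The number of nonnegative integers below `x` outside `X`. -/
def gapsBelow (X : Finset ℕ) (x : ℕ) : ℕ := (Finset.range x \ X).card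

/-- The size of the partition encoded by a finite set `X` of first-column hook lengths
(a β-set). -/
def betaSize (X : Finset ℕ) : ℕ := ∑ x ∈ X, gapsBelow X x

/-- The partition encoded by the β-set `X`: every `x ∈ X` contributes the part `gapsBelow X x`,
and zero parts are dropped. -/
def betaParts (X : Finset ℕ) : Multiset ℕ := (X.val.map (gapsBelow X)).filter (0 < ·)

/-- The `i`-th largest element `λᵢ + L - 1 - i` (0-indexed, `i < L`) of the `L`-element β-set
of `lam`. -/
def betaNum (lam : Multiset ℕ) (L i : ℕ) : ℕ := partNth lam i + (L - 1 - i)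

/-- The β-set of `lam` with `L` elements; it determines `lam` if `L` is at least the number of
parts. -/
def betaSet (lam : Multiset ℕ) (L : ℕ) : Finset ℕ := (Finset.range L).image (betaNum lam L)

lemma gapsBelow_add_card_filter_lt (X : Finset ℕ) (x : ℕ) :
    gapsBelow X x + (X.filter (· < x)).card = x := by
  have hinter : X.filter (· < x) = Finset.range x ∩ X := by
    ext y
    simp [and_comm]
  rw [gapsBelow, hinter, Finset.card_sdiff_add_card_inter, Finset.card_range]

lemma gapsBelow_mono (X : Finset ℕ) : Monotone (gapsBelow X) := fun _ _ hxy =>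
  Finset.card_le_card (Finset.sdiff_subset_sdiff (Finset.range_mono hxy) subset_rfl)

section InsertMax

variable {s : Finset ℕ} {a : ℕ}

lemma gapsBelow_insert_max (hmax : ∀ x ∈ s, x < a) : gapsBelow (insert a s) a + s.card = a := by
  have hfilter : (insert a s).filter (· < a) = s := by
    rw [Finset.filter_insert, if_neg (lt_irrefl a), Finset.filter_true_of_mem hmax]
  simpa only [hfilter] using gapsBelow_add_card_filter_lt (insert a s) a

lemma map_gapsBelow_insert_max (hmax : ∀ x ∈ s, x < a) :
    (insert a s).val.map (gapsBelow (insert a s)) =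
      gapsBelow (insert a s) a ::ₘ s.val.map (gapsBelow s) := by
  rw [Finset.insert_val_of_notMem fun ha => lt_irrefl a (hmax a ha), Multiset.map_cons]
  refine congrArg _ (Multiset.map_congr rfl fun x hx => ?_)
  have ha : a ∉ Finset.range x := by simpa using (hmax x hx).le
  rw [gapsBelow, Finset.sdiff_insert, Finset.erase_eq_of_notMem (by simp [ha]), gapsBelow]

end InsertMax

lemma betaSize_add_choose_two (X : Finset ℕ) :
    betaSize X + X.card.choose 2 = ∑ x ∈ X, x := by
  induction X using Finset.induction_on_max with
  | empty => rfl
  | insert a s hmax ih =>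
    have ha : a ∉ s := fun ha => lt_irrefl a (hmax a ha)
    have hgap := gapsBelow_insert_max hmax
    rw [betaSize, Finset.sum, map_gapsBelow_insert_max hmax, Multiset.sum_cons, ← Finset.sum,
      ← betaSize, Finset.card_insert_of_notMem ha, Finset.sum_insert ha,
      Nat.choose_succ_succ' s.card 1, Nat.choose_one_right, one_add_one_eq_two]
    omega

lemma sum_betaParts (X : Finset ℕ) : (betaParts X).sum = betaSize X := by
  have hzero : ((X.val.map (gapsBelow X)).filter (¬ 0 < ·)).sum = 0 :=
    Multiset.sum_eq_zero fun m hm => by simpa using (Multiset.mem_filter.1 hm).2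
  have hsplit := congrArg Multiset.sum (Multiset.filter_add_not (0 < ·) (X.val.map (gapsBelow X)))
  rwa [Multiset.sum_add, hzero, add_zero] at hsplit

lemma max_le_max_of_map_gapsBelow_eq {s t : Finset ℕ} {a b : ℕ} (hs : ∀ x ∈ s, x < a)
    (ht : ∀ x ∈ t, x < b) (hcard : s.card = t.card)
    (h : (insert a s).val.map (gapsBelow (insert a s)) =
      (insert b t).val.map (gapsBelow (insert b t))) : a ≤ b := by
  have hmem : gapsBelow (insert a s) a ∈ (insert b t).val.map (gapsBelow (insert b t)) :=
    h ▸ Multiset.mem_map_of_mem _ (Finset.mem_insert_self a s)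
  obtain ⟨y, hy, hya⟩ := Multiset.mem_map.1 hmem
  have hyb : y ≤ b := (Finset.mem_insert.1 hy).elim le_of_eq fun hy => (ht y hy).le
  have hgap := gapsBelow_mono (insert b t) hyb
  have ha := gapsBelow_insert_max hs
  have hb := gapsBelow_insert_max ht
  omega

lemma eq_of_map_gapsBelow_eq {X Y : Finset ℕ}
    (h : X.val.map (gapsBelow X) = Y.val.map (gapsBelow Y)) : X = Y := by
  induction X using Finset.induction_on_max generalizing Y with
  | empty => simpa [eq_comm] using h
  | insert a s hs ih =>
    induction Y using Finset.induction_on_max with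
    | empty =>
      rw [map_gapsBelow_insert_max hs] at h
      exact absurd h Multiset.cons_ne_zero
    | insert b t ht _ =>
      have hcons := h
      rw [map_gapsBelow_insert_max hs, map_gapsBelow_insert_max ht] at hcons
      have hcard : s.card = t.card := by simpa using congrArg Multiset.card hcons
      obtain rfl : a = b := le_antisymm (max_le_max_of_map_gapsBelow_eq hs ht hcard h)
        (max_le_max_of_map_gapsBelow_eq ht hs hcard.symm h.symm)
      have hgap : gapsBelow (insert a s) a = gapsBelow (insert a t) a := by
        have := gapsBelow_insert_max hs
        have := gapsBelow_insert_max ht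
        omega
      rw [hgap, Multiset.cons_inj_right] at hcons
      rw [ih hcons]

lemma eq_of_filter_pos_eq {M N : Multiset ℕ} (hcard : M.card = N.card)
    (h : M.filter (0 < ·) = N.filter (0 < ·)) : M = N := by
  have hzeros (K : Multiset ℕ) : K.filter (¬ 0 < ·) =
      Multiset.replicate (K.card - (K.filter (0 < ·)).card) 0 := by
    have hsplit := congrArg Multiset.card (Multiset.filter_add_not (0 < ·) K)
    rw [Multiset.card_add] at hsplit
    exact Multiset.eq_replicate.2
      ⟨by omega, fun m hm => by simpa using (Multiset.mem_filter.1 hm).2⟩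
  rw [← Multiset.filter_add_not (0 < ·) M, ← Multiset.filter_add_not (0 < ·) N, hzeros, hzeros,
    hcard, h]

lemma betaParts_injOn (L : ℕ) : Set.InjOn betaParts {X | X.card = L} :=
  fun X hX Y hY h => eq_of_map_gapsBelow_eq <| eq_of_filter_pos_eq
    (by rw [Multiset.card_map, Multiset.card_map]; exact hX.trans hY.symm) h

lemma betaNum_strictAntiOn (lam : Multiset ℕ) (L : ℕ) :
    StrictAntiOn (betaNum lam L) (Finset.range L) := by
  intro i _ i' hi' hii'
  have := partNth_antitone lam hii'.le
  rw [Finset.coe_range, Set.mem_Iio] at hi'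
  unfold betaNum
  omega

lemma card_betaSet (lam : Multiset ℕ) (L : ℕ) : (betaSet lam L).card = L := by
  rw [betaSet, Finset.card_image_of_injOn (betaNum_strictAntiOn lam L).injOn, Finset.card_range]

lemma gapsBelow_betaSet (lam : Multiset ℕ) {L i : ℕ} (hi : i < L) :
    gapsBelow (betaSet lam L) (betaNum lam L i) = partNth lam i := by
  have hfilter : (betaSet lam L).filter (· < betaNum lam L i) =
      (Finset.Ioo i L).image (betaNum lam L) := by
    rw [betaSet, Finset.filter_image]
    congr 1
    ext i'
    rw [Finset.mem_filter, Finset.mem_range, Finset.mem_Ioo, and_comm]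
    exact and_congr_left fun hi' =>
      (betaNum_strictAntiOn lam L).lt_iff_gt (by simpa) (by simpa)
  have hcard : ((betaSet lam L).filter (· < betaNum lam L i)).card = L - i - 1 := by
    rw [hfilter, Finset.card_image_of_injOn, Nat.card_Ioo]
    refine (betaNum_strictAntiOn lam L).injOn.mono fun i' hi' => ?_
    simp_all
  have := gapsBelow_add_card_filter_lt (betaSet lam L) (betaNum lam L i)
  rw [hcard, betaNum] at this
  rw [betaNum]
  omega

lemma betaParts_betaSet {lam : Multiset ℕ} (hpos : ∀ m ∈ lam, 0 < m) {L : ℕ}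
    (hL : lam.card ≤ L) : betaParts (betaSet lam L) = lam := by
  rw [betaParts, betaSet, Finset.image_val_of_injOn (betaNum_strictAntiOn lam L).injOn,
    Multiset.map_map, Finset.range_val, ← betaSet]
  have hgaps : (Multiset.range L).map (gapsBelow (betaSet lam L) ∘ betaNum lam L) =
      (Multiset.range L).map (partNth lam) :=
    Multiset.map_congr rfl fun i hi => gapsBelow_betaSet lam (Multiset.mem_range.1 hi)
  rw [hgaps, filter_pos_map_partNth hpos hL]

lemma betaSize_betaSet {lam : Multiset ℕ} (hpos : ∀ m ∈ lam, 0 < m) {L : ℕ}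
    (hL : lam.card ≤ L) : betaSize (betaSet lam L) = lam.sum := by
  rw [← sum_betaParts, betaParts_betaSet hpos hL]

/-! ### The abacus -/

/-- The pairs `x ∈ X`, `y ∉ X` with `y < x` and `e ∣ x - y`: the moves of a bead `x` down its
runner on the `e`-abacus, which correspond to the hooks of length divisible by `e`. -/
def hookPairs (e : ℕ) (X : Finset ℕ) : Finset (Σ _ : ℕ, ℕ) :=
  X.sigma fun x => (Finset.range x \ X).filter fun y => e ∣ x - y

/-- The number of elements of `X` below `x` on the runner of `x` in the `e`-abacus. -/
def runnerRank (e : ℕ) (X : Finset ℕ) (x : ℕ) : ℕ :=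
  (X.filter fun y => y < x ∧ e ∣ x - y).card

/-- The number of even minus the number of odd elements: it determines the 2-core of the
partition with β-set `X`. -/
def charge (X : Finset ℕ) : ℤ := ∑ x ∈ X, (-1) ^ x

/-- The number of hooks of `lam` of length divisible by `e`. -/
def hookCount (e : ℕ) (lam : Multiset ℕ) : ℕ :=
  ((cellsOf lam).filter fun c => e ∣ hookLen lam c).card

lemma card_filter_dvd_sub (e x : ℕ) :
    ((Finset.range x).filter fun y => e ∣ x - y).card = x / e := by
  rw [← Nat.Ioc_filter_dvd_card_eq_div]
  refine Finset.card_nbij' (x - ·) (x - ·) ?_ ?_ ?_ ?_ <;> intro y hy <;>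
    simp only [Finset.coe_filter, Finset.mem_range, Finset.mem_Ioc, Set.mem_ofPred_eq] at hy ⊢
  · exact ⟨by omega, hy.2⟩
  · exact ⟨by omega, by rw [Nat.sub_sub_self hy.1.2]; exact hy.2⟩
  · omega
  · omega

lemma card_hookPairs_add_sum_runnerRank (e : ℕ) (X : Finset ℕ) :
    (hookPairs e X).card + ∑ x ∈ X, runnerRank e X x = ∑ x ∈ X, x / e := by
  rw [hookPairs, Finset.card_sigma, ← Finset.sum_add_distrib]
  refine Finset.sum_congr rfl fun x _ => ?_
  have hinter : (X.filter fun y => y < x ∧ e ∣ x - y) =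
      (Finset.range x ∩ X).filter fun y => e ∣ x - y := by
    ext y
    simp only [Finset.mem_filter, Finset.mem_inter, Finset.mem_range]
    tauto
  rw [runnerRank, hinter, ← Finset.card_union_of_disjoint, ← Finset.filter_union,
    Finset.sdiff_union_inter, card_filter_dvd_sub]
  exact Finset.disjoint_filter_filter (Finset.disjoint_sdiff_inter _ _)

lemma mul_card_hookPairs_add_sum (e : ℕ) (X : Finset ℕ) :
    e * (hookPairs e X).card + ∑ x ∈ X, (x % e + e * runnerRank e X x) = ∑ x ∈ X, x := by
  calc e * (hookPairs e X).card + ∑ x ∈ X, (x % e + e * runnerRank e X x)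
      = e * ((hookPairs e X).card + ∑ x ∈ X, runnerRank e X x) + ∑ x ∈ X, x % e := by
        rw [Finset.sum_add_distrib, ← Finset.mul_sum]
        ring
    _ = ∑ x ∈ X, x := by
        rw [card_hookPairs_add_sum_runnerRank, Finset.mul_sum, ← Finset.sum_add_distrib]
        exact Finset.sum_congr rfl fun x _ => Nat.div_add_mod x e

lemma runnerRank_lt_runnerRank {e : ℕ} {X : Finset ℕ} {x y : ℕ} (hx : x ∈ X) (hxy : x < y)
    (hmod : x ≡ y [MOD e]) : runnerRank e X x < runnerRank e X y := by
  have hdvd : e ∣ y - x := (Nat.modEq_iff_dvd' hxy.le).1 hmod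
  refine Finset.card_lt_card ⟨fun z hz => ?_, fun hsub => ?_⟩
  · obtain ⟨hzX, hzx, hdz⟩ := Finset.mem_filter.1 hz
    refine Finset.mem_filter.2 ⟨hzX, hzx.trans hxy, ?_⟩
    have := dvd_add hdvd hdz
    rwa [Nat.sub_add_sub_cancel hxy.le hzx.le] at this
  · have := hsub (Finset.mem_filter.2 ⟨hx, hxy, hdvd⟩)
    exact lt_irrefl x (Finset.mem_filter.1 this).2.1

-- `x % e + e * runnerRank e X x` is where `x` lands when the beads on each runner slide down.
lemma injOn_mod_add_mul_runnerRank (e : ℕ) (X : Finset ℕ) :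
    Set.InjOn (fun x => x % e + e * runnerRank e X x) X := by
  intro x hx y hy hxy
  have hmod : x ≡ y [MOD e] := by simpa [Nat.ModEq] using congrArg (· % e) hxy
  have hrank : e * runnerRank e X x = e * runnerRank e X y := by
    have : x % e = y % e := hmod
    simp only at hxy
    omega
  rcases e.eq_zero_or_pos with rfl | he
  · simpa using hmod
  replace hrank := Nat.eq_of_mul_eq_mul_left he hrank
  rcases lt_trichotomy x y with hlt | heq | hgt
  · exact absurd hrank (runnerRank_lt_runnerRank hx hlt hmod).ne
  · exact heq
  · exact absurd hrank (runnerRank_lt_runnerRank hy hgt hmod.symm).ne'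

lemma mul_card_hookPairs_le_betaSize (e : ℕ) (X : Finset ℕ) :
    e * (hookPairs e X).card ≤ betaSize X := by
  have hinj := injOn_mod_add_mul_runnerRank e X
  have hcore := betaSize_add_choose_two (X.image fun x => x % e + e * runnerRank e X x)
  rw [Finset.card_image_of_injOn hinj, Finset.sum_image hinj] at hcore
  have hsum := mul_card_hookPairs_add_sum e X
  have hsize := betaSize_add_choose_two X
  omega

lemma sum_card_filter_lt (X : Finset ℕ) :
    ∑ x ∈ X, (X.filter (· < x)).card = X.card.choose 2 := by
  have hsum : betaSize X + ∑ x ∈ X, (X.filter (· < x)).card = ∑ x ∈ X, x := by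
    rw [betaSize, ← Finset.sum_add_distrib]
    exact Finset.sum_congr rfl fun x _ => gapsBelow_add_card_filter_lt X x
  have := betaSize_add_choose_two X
  omega

lemma sum_filter_runnerRank {e : ℕ} (X : Finset ℕ) (p : ℕ → Prop) [DecidablePred p]
    (hp : ∀ x y, p x → y < x → (p y ↔ e ∣ x - y)) :
    ∑ x ∈ X.filter p, runnerRank e X x = (X.filter p).card.choose 2 := by
  rw [← sum_card_filter_lt]
  refine Finset.sum_congr rfl fun x hx => congrArg Finset.card ?_
  ext y
  simp only [Finset.mem_filter]
  have := hp x y (Finset.mem_filter.1 hx).2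
  tauto

lemma sum_runnerRank_two (X : Finset ℕ) :
    ∑ x ∈ X, runnerRank 2 X x =
      (X.filter Even).card.choose 2 + (X.filter (¬ Even ·)).card.choose 2 := by
  rw [← Finset.sum_filter_add_sum_filter_not X Even, sum_filter_runnerRank X Even,
    sum_filter_runnerRank X (¬ Even ·)] <;>
  · intro x y hx hyx
    rw [Nat.even_iff] at *
    omega

lemma two_mul_choose_two_cast (n : ℕ) : 2 * (n.choose 2 : ℤ) = n * (n - 1) := by
  induction n with
  | zero => simp
  | succ n ih =>
    rw [Nat.choose_succ_succ' n 1, Nat.choose_one_right, one_add_one_eq_two]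
    push_cast
    linarith

lemma charge_eq_card_sub_card (X : Finset ℕ) :
    charge X = (X.filter Even).card - (X.filter (¬ Even ·)).card := by
  have heven : ∑ x ∈ X.filter Even, (-1 : ℤ) ^ x = (X.filter Even).card := by
    rw [Finset.sum_congr rfl fun x hx => (Finset.mem_filter.1 hx).2.neg_one_pow]
    simp
  have hodd : ∑ x ∈ X.filter (¬ Even ·), (-1 : ℤ) ^ x = -(X.filter (¬ Even ·)).card := by
    rw [Finset.sum_congr rfl fun x hx =>
      (Nat.not_even_iff_odd.1 (Finset.mem_filter.1 hx).2).neg_one_pow]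
    simp
  rw [charge, ← Finset.sum_filter_add_sum_filter_not X Even, heven, hodd, sub_eq_add_neg]

lemma two_mul_betaSize_eq (X : Finset ℕ) :
    2 * (betaSize X : ℤ) = 4 * (hookPairs 2 X).card + charge X * (charge X - 1) := by
  have hsize := betaSize_add_choose_two X
  have hsum := mul_card_hookPairs_add_sum 2 X
  have hmod : ∑ x ∈ X, x % 2 = (X.filter (¬ Even ·)).card := by
    rw [Finset.card_filter]
    refine Finset.sum_congr rfl fun x _ => ?_
    split_ifs with hx <;> rw [Nat.even_iff] at hx <;> omega
  rw [Finset.sum_add_distrib, ← Finset.mul_sum, sum_runnerRank_two, hmod, ← hsize,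
    ← Finset.card_filter_add_card_filter_not (s := X) Even] at hsum
  rw [charge_eq_card_sub_card]
  generalize (X.filter Even).card = a at *
  generalize (X.filter (¬ Even ·)).card = b at *
  have ha := two_mul_choose_two_cast a
  have hb := two_mul_choose_two_cast b
  have hab := two_mul_choose_two_cast (a + b)
  zify at hsum
  push_cast at hab
  linear_combination 2 * ha + 2 * hb - hab - 2 * hsum

lemma add_sub_conjNth_notMem_betaSet (lam : Multiset ℕ) (L j : ℕ) :
    j + (L - conjNth lam j) ∉ betaSet lam L := by
  rw [betaSet, Finset.mem_image]
  rintro ⟨i, hi, heq⟩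
  rw [Finset.mem_range] at hi
  have hgalois := lt_partNth_iff_lt_conjNth lam i j
  unfold betaNum at heq
  omega

lemma strictMono_add_sub_conjNth (lam : Multiset ℕ) (L : ℕ) :
    StrictMono fun j => j + (L - conjNth lam j) := by
  intro j j' hjj'
  have := conjNth_antitone lam hjj'.le
  dsimp only
  omega

lemma hookLen_add_sub_conjNth {lam : Multiset ℕ} {L : ℕ} (hL : lam.card ≤ L) {c : ℕ × ℕ}
    (hc : c ∈ cellsOf lam) :
    hookLen lam c + (c.2 + (L - conjNth lam c.2)) = betaNum lam L c.1 := by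
  obtain ⟨-, hj, hi⟩ := lt_of_mem_cellsOf hc
  have := conjNth_le_card lam c.2
  unfold hookLen betaNum
  omega

lemma hookCount_le_card_hookPairs (e : ℕ) {lam : Multiset ℕ} {L : ℕ} (hL : lam.card ≤ L) :
    hookCount e lam ≤ (hookPairs e (betaSet lam L)).card := by
  have hrow {c : ℕ × ℕ} (hc : c ∈ cellsOf lam) : c.1 ∈ Finset.range L :=
    Finset.mem_range.2 ((lt_of_mem_cellsOf hc).1.trans_le hL)
  refine Finset.card_le_card_of_injOn
    (fun c => ⟨betaNum lam L c.1, c.2 + (L - conjNth lam c.2)⟩) ?_ ?_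
  · intro c hc
    obtain ⟨hc, hdvd⟩ := Finset.mem_filter.1 hc
    have hhook := hookLen_add_sub_conjNth hL hc
    have hpos := hookLen_pos hc
    refine Finset.mem_sigma.2 ⟨Finset.mem_image_of_mem _ (hrow hc), ?_⟩
    simp only [Finset.mem_filter, Finset.mem_sdiff, Finset.mem_range]
    exact ⟨⟨by omega, add_sub_conjNth_notMem_betaSet lam L c.2⟩,
      by rwa [← hhook, Nat.add_sub_cancel]⟩
  · intro c hc c' hc' heq
    obtain ⟨hfst, hsnd⟩ := Sigma.mk.inj_iff.1 heq
    exact Prod.ext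
      ((betaNum_strictAntiOn lam L).injOn (hrow (Finset.mem_filter.1 hc).1)
        (hrow (Finset.mem_filter.1 hc').1) hfst)
      ((strictMono_add_sub_conjNth lam L).injective (eq_of_heq hsnd))

lemma mul_hookCount_le_sum (e : ℕ) {lam : Multiset ℕ} (hpos : ∀ m ∈ lam, 0 < m) :
    e * hookCount e lam ≤ lam.sum :=
  calc e * hookCount e lam ≤ e * (hookPairs e (betaSet lam lam.card)).card :=
        Nat.mul_le_mul_left e (hookCount_le_card_hookPairs e le_rfl)
    _ ≤ betaSize (betaSet lam lam.card) := mul_card_hookPairs_le_betaSize ..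
    _ = lam.sum := betaSize_betaSet hpos le_rfl

/-- The number of even hooks which `lam` lacks in comparison with a partition of the same size
and trivial 2-core. -/
def evenHookDefect (lam : Multiset ℕ) : ℕ := lam.sum / 2 - hookCount 2 lam

lemma charge_mul_le_of_evenHookDefect_lt {lam : Multiset ℕ} (hpos : ∀ m ∈ lam, 0 < m) {L V : ℕ}
    (hL : lam.card ≤ L) (hV : evenHookDefect lam < V) :
    charge (betaSet lam L) * (charge (betaSet lam L) - 1) < 4 * V := by
  have hcharge := two_mul_betaSize_eq (betaSet lam L)
  have hcount := hookCount_le_card_hookPairs 2 hL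
  rw [betaSize_betaSet hpos hL] at hcharge
  unfold evenHookDefect at hV
  omega

lemma abs_charge_le_of_evenHookDefect_lt {lam : Multiset ℕ} (hpos : ∀ m ∈ lam, 0 < m) {L V : ℕ}
    (hL : lam.card ≤ L) (hV : evenHookDefect lam < V) :
    |charge (betaSet lam L)| ≤ 4 * V := by
  have := charge_mul_le_of_evenHookDefect_lt hpos hL hV
  rw [abs_le]
  constructor <;> nlinarith

/-! ### 2-adic valuations -/

lemma padicValNat_prod {ι : Type*} {p : ℕ} [hp : Fact p.Prime] {s : Finset ι} {g : ι → ℕ}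
    (hg : ∀ i ∈ s, g i ≠ 0) : padicValNat p (∏ i ∈ s, g i) = ∑ i ∈ s, padicValNat p (g i) := by
  simp only [← Nat.factorization_def _ hp.out]
  exact Nat.factorization_prod_apply hg

lemma padicValNat_eq_card_pow_dvd {p : ℕ} [hp : Fact p.Prime] {h b : ℕ} (hpos : 0 < h)
    (hb : h < p ^ b) : padicValNat p h = ((Finset.Ico 1 b).filter fun j => p ^ j ∣ h).card := by
  rw [← Nat.factorization_def _ hp.out, Nat.factorization_eq_card_pow_dvd_of_lt hp.out hpos hb]

lemma hookLen_le_sum {lam : Multiset ℕ} (hpos : ∀ m ∈ lam, 0 < m) {c : ℕ × ℕ}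
    (hc : c ∈ cellsOf lam) : hookLen lam c ≤ lam.sum := by
  have hcount : 0 < hookCount (hookLen lam c) lam :=
    Finset.card_pos.2 ⟨c, Finset.mem_filter.2 ⟨hc, dvd_rfl⟩⟩
  exact (Nat.le_mul_of_pos_right _ hcount).trans (mul_hookCount_le_sum _ hpos)

lemma padicValNat_hookProd {p : ℕ} [Fact p.Prime] {lam : Multiset ℕ} (hpos : ∀ m ∈ lam, 0 < m)
    {b : ℕ} (hb : lam.sum < p ^ b) :
    padicValNat p (hookProd lam) = ∑ j ∈ Finset.Ico 1 b, hookCount (p ^ j) lam := by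
  rw [hookProd, padicValNat_prod fun c hc => (hookLen_pos hc).ne',
    Finset.sum_congr rfl fun c hc => padicValNat_eq_card_pow_dvd (hookLen_pos hc)
      ((hookLen_le_sum hpos hc).trans_lt hb)]
  simp only [hookCount, Finset.card_filter]
  exact Finset.sum_comm

lemma padicValNat_hookProd_add_le {p : ℕ} [hp : Fact p.Prime] {lam : Multiset ℕ}
    (hpos : ∀ m ∈ lam, 0 < m) :
    padicValNat p (hookProd lam) + (lam.sum / p - hookCount p lam) ≤
      padicValNat p lam.sum.factorial := by
  have hb : lam.sum < p ^ (lam.sum + 2) :=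
    (Nat.lt_pow_self hp.out.one_lt).trans_le (Nat.pow_le_pow_right hp.out.pos (by omega))
  have hcount (e : ℕ) (he : 0 < e) : hookCount e lam ≤ lam.sum / e :=
    (Nat.le_div_iff_mul_le he).2 (mul_comm e _ ▸ mul_hookCount_le_sum e hpos)
  have hfirst (g : ℕ → ℕ) : ∑ j ∈ Finset.Ico 1 (lam.sum + 2), g (p ^ j) =
      g p + ∑ j ∈ Finset.Ico 2 (lam.sum + 2), g (p ^ j) := by
    rw [Finset.sum_eq_sum_Ico_succ_bot (by omega), pow_one]
  rw [padicValNat_hookProd hpos hb, hfirst (hookCount · lam),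
    padicValNat_factorial (Nat.log_lt_of_lt_pow' (by omega) hb), hfirst (lam.sum / ·)]
  have hrest : ∑ j ∈ Finset.Ico 2 (lam.sum + 2), hookCount (p ^ j) lam ≤
      ∑ j ∈ Finset.Ico 2 (lam.sum + 2), lam.sum / p ^ j :=
    Finset.sum_le_sum fun j _ => hcount _ (pow_pos hp.out.pos j)
  have := hcount p hp.out.pos
  omega

lemma padicValNat_two_pow_sub_one_of_odd {x h : ℕ} (hx : Odd x) (hx1 : 1 < x) (hh : Odd h) :
    padicValNat 2 (x ^ h - 1) = padicValNat 2 (x - 1) := by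
  have hodd : Odd (∑ i ∈ Finset.range h, x ^ i) := by
    rw [Finset.odd_sum_iff_odd_card_odd, Finset.filter_true_of_mem fun i _ => hx.pow]
    simpa using hh
  rw [← geom_sum_mul_of_one_le hx1.le, padicValNat.mul hodd.pos.ne' (by omega),
    padicValNat.eq_zero_of_not_dvd hodd.not_two_dvd_nat, zero_add]

lemma padicValNat_two_pow_sub_one {x h : ℕ} (hx : Odd x) (hx1 : 1 < x) (hh : 0 < h) :
    padicValNat 2 (x ^ h - 1) = padicValNat 2 (x - 1) +
      (if 2 ∣ h then padicValNat 2 (x + 1) - 1 else 0) + padicValNat 2 h := by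
  split_ifs with hdvd
  · have hlte := padicValNat.pow_two_sub_one hx1 hx.not_two_dvd_nat hh.ne' (even_iff_two_dvd.2 hdvd)
    have : 1 ≤ padicValNat 2 (x + 1) :=
      one_le_padicValNat_of_dvd (by omega) (hx.add_odd odd_one).two_dvd
    omega
  · rw [padicValNat_two_pow_sub_one_of_odd hx hx1 (Nat.odd_iff.2 (by omega)),
      padicValNat.eq_zero_of_not_dvd hdvd, add_zero, add_zero]

/-- The 2-adic valuation of `ψ_m(x)`. -/
def psiVal (x m : ℕ) : ℕ := ∑ i ∈ Finset.Icc 1 m, padicValNat 2 (x ^ i - 1)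

/-- The 2-adic valuation of `∏_{h ∈ H(lam)} (x^{|h|} - 1)`. -/
def hookVal (x : ℕ) (lam : Multiset ℕ) : ℕ :=
  ∑ c ∈ cellsOf lam, padicValNat 2 (x ^ hookLen lam c - 1)

section Odd

variable {x : ℕ}

lemma psiVal_eq (hx : Odd x) (hx1 : 1 < x) (m : ℕ) :
    psiVal x m = m * padicValNat 2 (x - 1) + (m / 2) * (padicValNat 2 (x + 1) - 1) +
      padicValNat 2 m.factorial := by
  have hhalf : ((Finset.Icc 1 m).filter (2 ∣ ·)).card = m / 2 := Nat.Ioc_filter_dvd_card_eq_div m 2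
  rw [psiVal, Finset.sum_congr rfl fun i hi =>
    padicValNat_two_pow_sub_one hx hx1 (Finset.mem_Icc.1 hi).1, Finset.sum_add_distrib,
    Finset.sum_add_distrib, Finset.sum_const, Nat.card_Icc, ← Finset.sum_filter, Finset.sum_const,
    hhalf, ← Finset.prod_Ico_id_eq_factorial, Finset.Ico_add_one_right_eq_Icc,
    padicValNat_prod fun i hi => (Nat.one_le_iff_ne_zero.1 (Finset.mem_Icc.1 hi).1)]
  simp

lemma hookVal_eq (hx : Odd x) (hx1 : 1 < x) (lam : Multiset ℕ) :
    hookVal x lam = hookCount 1 lam * padicValNat 2 (x - 1) +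
      hookCount 2 lam * (padicValNat 2 (x + 1) - 1) + padicValNat 2 (hookProd lam) := by
  rw [hookVal, Finset.sum_congr rfl fun c hc =>
    padicValNat_two_pow_sub_one hx hx1 (hookLen_pos hc), Finset.sum_add_distrib,
    Finset.sum_add_distrib, Finset.sum_const, ← Finset.sum_filter, Finset.sum_const,
    hookProd, padicValNat_prod fun c hc => (hookLen_pos hc).ne']
  simp [hookCount]

lemma hookVal_add_evenHookDefect_le (hx : Odd x) (hx1 : 1 < x) {lam : Multiset ℕ}
    (hpos : ∀ m ∈ lam, 0 < m) : hookVal x lam + evenHookDefect lam ≤ psiVal x lam.sum := by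
  have hone : hookCount 1 lam ≤ lam.sum := by simpa using mul_hookCount_le_sum 1 hpos
  have htwo : hookCount 2 lam ≤ lam.sum / 2 := by have := mul_hookCount_le_sum 2 hpos; omega
  have hprod : padicValNat 2 (hookProd lam) + evenHookDefect lam ≤ _ :=
    padicValNat_hookProd_add_le hpos
  rw [psiVal_eq hx hx1, hookVal_eq hx hx1, add_assoc]
  gcongr

lemma sum_psiVal_le (hx : Odd x) (hx1 : 1 < x) {ι : Type*} (s : Finset ι) (g : ι → ℕ) :
    ∑ i ∈ s, psiVal x (g i) ≤ psiVal x (∑ i ∈ s, g i) := by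
  have hhalf : ∑ i ∈ s, g i / 2 ≤ (∑ i ∈ s, g i) / 2 := by
    rw [Nat.le_div_iff_mul_le two_pos, Finset.sum_mul]
    exact Finset.sum_le_sum fun i _ => Nat.div_mul_le_self (g i) 2
  have hfact : ∑ i ∈ s, padicValNat 2 (g i).factorial ≤
      padicValNat 2 (∑ i ∈ s, g i).factorial := by
    rw [← padicValNat_prod fun i _ => Nat.factorial_ne_zero _]
    exact padicValNat_dvd_iff_le (Nat.factorial_ne_zero _) |>.1
      ((pow_padicValNat_dvd).trans (Nat.prod_factorial_dvd_factorial_sum s g))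
  simp only [psiVal_eq hx hx1, Finset.sum_add_distrib, ← Finset.sum_mul]
  gcongr

lemma psiVal_pow_add_le (hx : Odd x) (hx1 : 1 < x) {d : ℕ} (hd : 0 < d) (m : ℕ) :
    psiVal (x ^ d) m + (d - 1) * m ≤ psiVal x (d * m) := by
  have hinj : Function.Injective (d * ·) := fun i j hij => Nat.eq_of_mul_eq_mul_left hd hij
  have hsub : (Finset.Icc 1 m).image (d * ·) ⊆ Finset.Icc 1 (d * m) := by
    intro j hj
    obtain ⟨i, hi, rfl⟩ := Finset.mem_image.1 hj
    obtain ⟨hi1, him⟩ := Finset.mem_Icc.1 hi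
    exact Finset.mem_Icc.2 ⟨Nat.mul_pos hd hi1, Nat.mul_le_mul_left d him⟩
  have hmultiples : ∑ j ∈ (Finset.Icc 1 m).image (d * ·), padicValNat 2 (x ^ j - 1) =
      psiVal (x ^ d) m := by
    simp only [Finset.sum_image hinj.injOn, psiVal, pow_mul]
  have hothers : (d - 1) * m ≤
      ∑ j ∈ Finset.Icc 1 (d * m) \ (Finset.Icc 1 m).image (d * ·), padicValNat 2 (x ^ j - 1) := by
    have hcard : (Finset.Icc 1 (d * m) \ (Finset.Icc 1 m).image (d * ·)).card = (d - 1) * m := by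
      rw [Finset.card_sdiff_of_subset hsub, Finset.card_image_of_injective _ hinj, Nat.card_Icc,
        Nat.card_Icc, Nat.add_sub_cancel, Nat.add_sub_cancel, Nat.sub_mul, one_mul]
    rw [← hcard, ← smul_eq_mul, ← mul_one (Finset.card _), ← smul_eq_mul]
    refine Finset.card_nsmul_le_sum _ _ 1 fun j hj => ?_
    have hj1 := (Finset.mem_Icc.1 (Finset.mem_sdiff.1 hj).1).1
    have hpow : 1 < x ^ j := Nat.one_lt_pow (by omega) hx1
    exact one_le_padicValNat_of_dvd (by omega) (hx.pow.tsub_odd odd_one).two_dvd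
  rw [psiVal.eq_def x, ← Finset.sum_sdiff hsub, hmultiples, add_comm]
  exact Nat.add_le_add_right hothers _

end Odd

lemma padicValRat_prod {ι : Type*} {p : ℕ} [Fact p.Prime] {s : Finset ι} {g : ι → ℚ}
    (hg : ∀ i ∈ s, g i ≠ 0) : padicValRat p (∏ i ∈ s, g i) = ∑ i ∈ s, padicValRat p (g i) := by
  induction s using Finset.cons_induction with
  | empty => simp
  | cons a s ha ih =>
    rw [Finset.forall_mem_cons] at hg
    rw [Finset.prod_cons, Finset.sum_cons, padicValRat.mul hg.1 (Finset.prod_ne_zero_iff.2 hg.2),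
      ih hg.2]

section PowSubOne

variable {x : ℕ}

lemma cast_pow_sub_one (hx1 : 1 < x) (h : ℕ) : (x : ℚ) ^ h - 1 = ((x ^ h - 1 : ℕ) : ℚ) := by
  rw [Nat.cast_sub (Nat.one_le_pow _ _ (by omega)), Nat.cast_pow, Nat.cast_one]

lemma cast_pow_sub_one_ne_zero (hx1 : 1 < x) {h : ℕ} (hh : 0 < h) : (x : ℚ) ^ h - 1 ≠ 0 :=
  sub_ne_zero.2 (one_lt_pow₀ (Nat.one_lt_cast.2 hx1) hh.ne').ne'

lemma psiPoly_ne_zero (hx1 : 1 < x) (m : ℕ) : psiPoly m (x : ℚ) ≠ 0 :=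
  Finset.prod_ne_zero_iff.2 fun _ hi => cast_pow_sub_one_ne_zero hx1 (Finset.mem_Icc.1 hi).1

lemma hFactor_ne_zero (hx1 : 1 < x) (lam : Multiset ℕ) : hFactor lam (x : ℚ) ≠ 0 :=
  div_ne_zero (pow_ne_zero _ (Nat.cast_ne_zero.2 (by omega)))
    (Finset.prod_ne_zero_iff.2 fun _ hc => cast_pow_sub_one_ne_zero hx1 (hookLen_pos hc))

lemma padicValRat_psiPoly (hx1 : 1 < x) (m : ℕ) :
    padicValRat 2 (psiPoly m (x : ℚ)) = psiVal x m := by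
  rw [psiPoly, padicValRat_prod fun i hi =>
    cast_pow_sub_one_ne_zero hx1 (Finset.mem_Icc.1 hi).1, psiVal, Nat.cast_sum]
  exact Finset.sum_congr rfl fun i _ => by rw [cast_pow_sub_one hx1, padicValRat.of_nat]

lemma padicValRat_hFactor (hx : Odd x) (hx1 : 1 < x) (lam : Multiset ℕ) :
    padicValRat 2 (hFactor lam (x : ℚ)) = -hookVal x lam := by
  have hne : ∀ c ∈ cellsOf lam, (x : ℚ) ^ hookLen lam c - 1 ≠ 0 := fun c hc =>
    cast_pow_sub_one_ne_zero hx1 (hookLen_pos hc)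
  have hx0 : (x : ℚ) ≠ 0 := Nat.cast_ne_zero.2 (by omega)
  rw [hFactor, padicValRat.div (pow_ne_zero _ hx0) (Finset.prod_ne_zero_iff.2 hne),
    padicValRat.pow, padicValRat.of_nat, padicValNat.eq_zero_of_not_dvd hx.not_two_dvd_nat,
    Nat.cast_zero, mul_zero, zero_sub, padicValRat_prod hne, hookVal, Nat.cast_sum]
  exact congrArg _ (Finset.sum_congr rfl fun c _ => by
    rw [cast_pow_sub_one hx1, padicValRat.of_nat])

end PowSubOne

section DMu

variable {F : Type*} [Field F] {q : ℕ}

lemma padicValRat_dMu (hq : Odd q) (hq1 : 1 < q) (n : ℕ) {μ : Polynomial F →₀ Multiset ℕ}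
    (hdeg : ∀ f ∈ μ.support, 0 < f.natDegree) :
    padicValRat 2 (dMu q n μ) =
      psiVal q n - ∑ f ∈ μ.support, (hookVal (q ^ f.natDegree) (μ f) : ℤ) := by
  have hpow : ∀ f ∈ μ.support, 1 < q ^ f.natDegree := fun f hf =>
    Nat.one_lt_pow (hdeg f hf).ne' hq1
  have hne : ∀ f ∈ μ.support, hFactor (μ f) ((q : ℚ) ^ f.natDegree) ≠ 0 := fun f hf =>
    mod_cast hFactor_ne_zero (hpow f hf) (μ f)
  rw [dMu, padicValRat.mul (psiPoly_ne_zero hq1 n) (Finset.prod_ne_zero_iff.2 hne),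
    padicValRat_psiPoly hq1, padicValRat_prod hne, sub_eq_add_neg, ← Finset.sum_neg_distrib]
  refine congrArg _ (Finset.sum_congr rfl fun f hf => ?_)
  rw [← padicValRat_hFactor hq.pow (hpow f hf), Nat.cast_pow]

lemma le_padicValRat_dMu (hq : Odd q) (hq1 : 1 < q) {n : ℕ} {μ : Polynomial F →₀ Multiset ℕ}
    (hμ : IsXn F n μ) :
    ((∑ f ∈ μ.support, ((f.natDegree - 1) * (μ f).sum + evenHookDefect (μ f)) : ℕ) : ℤ) ≤
      padicValRat 2 (dMu q n μ) := by
  obtain ⟨hirred, hpos, hn⟩ := hμ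
  have hdeg : ∀ f ∈ μ.support, 0 < f.natDegree := fun f hf => (hirred f hf).2.1.natDegree_pos
  have hfactor : ∀ f ∈ μ.support, (f.natDegree - 1) * (μ f).sum + evenHookDefect (μ f) +
      hookVal (q ^ f.natDegree) (μ f) ≤ psiVal q ((μ f).sum * f.natDegree) := fun f hf => by
    have hdefect := hookVal_add_evenHookDefect_le hq.pow
      (Nat.one_lt_pow (hdeg f hf).ne' hq1) (hpos f)
    have hpow := psiVal_pow_add_le hq hq1 (hdeg f hf) (μ f).sum
    rw [mul_comm (μ f).sum]
    omega
  have hsum := (Finset.sum_le_sum hfactor).trans (sum_psiVal_le hq hq1 μ.support _)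
  rw [Finset.sum_add_distrib, show ∑ f ∈ μ.support, (μ f).sum * f.natDegree = n from hn] at hsum
  rw [padicValRat_dMu hq hq1 n hdeg, le_sub_iff_add_le]
  exact_mod_cast hsum

end DMu

/-! ### Counting β-sets by charge -/

lemma lt_betaSize_add_card {X : Finset ℕ} {x : ℕ} (hx : x ∈ X) : x < betaSize X + X.card := by
  have hgap : gapsBelow X x ≤ betaSize X :=
    Finset.single_le_sum (f := gapsBelow X) (fun _ _ => Nat.zero_le _) hx
  have hlt : (X.filter (· < x)).card < X.card :=
    Finset.card_lt_card (Finset.filter_ssubset.2 ⟨x, hx, lt_irrefl x⟩)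
  have := gapsBelow_add_card_filter_lt X x
  omega

/-- The β-sets with `L` elements which encode partitions of `m`; the size is an integer so that
it can be shifted by a negative charge. -/
def betaSets (L : ℕ) (m : ℤ) : Finset (Finset ℕ) :=
  (Finset.range (m.toNat + L)).powerset.filter fun X => X.card = L ∧ betaSize X = m

/-- The number of β-sets with `L` elements, size `m` and charge `t`. -/
def chargeCount (L : ℕ) (m t : ℤ) : ℕ := ((betaSets L m).filter (charge · = t)).card

lemma mem_betaSets {L : ℕ} {m : ℤ} {X : Finset ℕ} :
    X ∈ betaSets L m ↔ X.card = L ∧ betaSize X = m := by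
  rw [betaSets, Finset.mem_filter, Finset.mem_powerset, and_iff_right_iff_imp]
  rintro ⟨rfl, rfl⟩ x hx
  simpa using lt_betaSize_add_card hx

lemma card_betaSets_le (L m : ℕ) : (betaSets L m).card ≤ Fintype.card m.Partition := by
  let toPartition (X : betaSets L m) : m.Partition :=
    ⟨betaParts X, fun hi => (Multiset.mem_filter.1 hi).2, by
      rw [sum_betaParts]
      exact_mod_cast (mem_betaSets.1 X.2).2⟩
  rw [← Fintype.card_coe]
  refine Fintype.card_le_of_injective toPartition fun X Y hXY => Subtype.ext ?_
  exact betaParts_injOn L (mem_betaSets.1 X.2).1 (mem_betaSets.1 Y.2).1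
    (congrArg Nat.Partition.parts hXY)

lemma sum_chargeCount_le (L m : ℕ) (T : Finset ℤ) :
    ∑ t ∈ T, chargeCount L m t ≤ Fintype.card m.Partition :=
  (Finset.sum_card_fiberwise_eq_card_filter ..).trans_le
    ((Finset.card_filter_le ..).trans (card_betaSets_le L m))

lemma chargeCount_le_chargeCount {L L' : ℕ} {m m' t t' : ℤ} (g : Finset ℕ → Finset ℕ)
    (hinj : Set.InjOn g {X | X.card = L}) (hcard : ∀ X, X.card = L → (g X).card = L')
    (hsize : ∀ X, X.card = L → charge X = t → (betaSize (g X) : ℤ) - betaSize X = m' - m)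
    (hcharge : ∀ X, X.card = L → charge X = t → charge (g X) = t') :
    chargeCount L m t ≤ chargeCount L' m' t' := by
  refine Finset.card_le_card_of_injOn g ?_ (hinj.mono ?_) <;> intro X hX <;>
    obtain ⟨hX, hXt⟩ := Finset.mem_filter.1 hX <;> obtain ⟨hXL, hXm⟩ := mem_betaSets.1 hX
  · have := hsize X hXL hXt
    exact Finset.mem_filter.2 ⟨mem_betaSets.2 ⟨hcard X hXL, by omega⟩, hcharge X hXL hXt⟩
  · exact hXL

section InsertZero

variable {φ : ℕ → ℕ}

lemma zero_notMem_image (hφ : ∀ x, φ x ≠ 0) (X : Finset ℕ) : 0 ∉ X.image φ := by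
  simpa using fun x _ => hφ x

lemma insert_zero_image_injective (hinj : Function.Injective φ) (hφ : ∀ x, φ x ≠ 0) :
    Function.Injective fun X : Finset ℕ => insert 0 (X.image φ) := by
  intro X Y hXY
  have := congrArg (Finset.erase · 0) hXY
  simp only [Finset.erase_insert (zero_notMem_image hφ _)] at this
  exact Finset.image_injective hinj this

lemma card_insert_zero_image (hinj : Function.Injective φ) (hφ : ∀ x, φ x ≠ 0) (X : Finset ℕ) :
    (insert 0 (X.image φ)).card = X.card + 1 := by
  rw [Finset.card_insert_of_notMem (zero_notMem_image hφ X), Finset.card_image_of_injective _ hinj]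

lemma betaSize_insert_zero_image (hinj : Function.Injective φ) (hφ : ∀ x, φ x ≠ 0)
    (X : Finset ℕ) :
    (betaSize (insert 0 (X.image φ)) : ℤ) - betaSize X = ∑ x ∈ X, ((φ x : ℤ) - x - 1) := by
  have himage := betaSize_add_choose_two (insert 0 (X.image φ))
  have hX := betaSize_add_choose_two X
  rw [Finset.sum_insert (zero_notMem_image hφ X), Finset.sum_image hinj.injOn, zero_add,
    card_insert_zero_image hinj hφ, Nat.choose_succ_succ' X.card 1, Nat.choose_one_right,
    one_add_one_eq_two] at himage
  simp only [Finset.sum_sub_distrib, Finset.sum_const, nsmul_eq_mul, mul_one]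
  zify at himage hX
  linarith

lemma charge_insert_zero_image (hinj : Function.Injective φ) (hφ : ∀ x, φ x ≠ 0)
    (X : Finset ℕ) : charge (insert 0 (X.image φ)) = 1 + ∑ x ∈ X, (-1 : ℤ) ^ φ x := by
  rw [charge, Finset.sum_insert (zero_notMem_image hφ X), Finset.sum_image hinj.injOn, pow_zero]

end InsertZero

lemma chargeCount_le_succ_neg (L : ℕ) (m t : ℤ) :
    chargeCount L m t ≤ chargeCount (L + 1) m (1 - t) := by
  have hφ (x : ℕ) : x + 1 ≠ 0 := x.succ_ne_zero
  have hinj : Function.Injective (· + 1 : ℕ → ℕ) := add_left_injective 1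
  refine chargeCount_le_chargeCount (fun X => insert 0 (X.image (· + 1)))
    (insert_zero_image_injective hinj hφ).injOn ?_ ?_ ?_
  · rintro X rfl
    exact card_insert_zero_image hinj hφ X
  · intro X _ _
    rw [betaSize_insert_zero_image hinj hφ]
    simp
  · rintro X - rfl
    rw [charge_insert_zero_image hinj hφ, charge, sub_eq_add_neg, ← Finset.sum_neg_distrib]
    simp only [pow_succ, mul_neg, mul_one]

lemma chargeCount_le_add_two_mul_card (L j : ℕ) (m t : ℤ) :
    chargeCount L m t ≤ chargeCount (L + 2 * j) m t := by
  induction j with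
  | zero => rfl
  | succ j ih =>
    refine ih.trans ((chargeCount_le_succ_neg _ m t).trans ?_)
    simpa only [sub_sub_cancel, mul_add, mul_one, ← add_assoc, Nat.reduceAdd] using
      chargeCount_le_succ_neg (L + 2 * j + 1) m (1 - t)

/-- Moves the even numbers up by one even number, which frees `0`: on the 2-abacus, the map that
pushes up the even runner. -/
def pushEven (x : ℕ) : ℕ := if Even x then x + 2 else x

lemma even_pushEven {x : ℕ} : Even (pushEven x) ↔ Even x := by
  rw [pushEven]
  split_ifs <;> simp [*, Nat.even_add]

lemma pushEven_ne_zero (x : ℕ) : pushEven x ≠ 0 := by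
  rw [pushEven]
  split_ifs with hx
  · omega
  · rintro rfl
    exact hx Even.zero

lemma pushEven_injective : Function.Injective pushEven := by
  intro x y hxy
  have heven : Even x ↔ Even y := by rw [← even_pushEven, hxy, even_pushEven]
  simp only [pushEven, heven] at hxy
  split_ifs at hxy <;> omega

lemma pushEven_sub_sub_one (x : ℕ) : (pushEven x : ℤ) - x - 1 = (-1) ^ x := by
  rw [pushEven]
  split_ifs with hx
  · rw [hx.neg_one_pow]
    push_cast
    ring
  · rw [(Nat.not_even_iff_odd.1 hx).neg_one_pow]
    ring

lemma chargeCount_le_succ (L : ℕ) (m t : ℤ) :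
    chargeCount L m t ≤ chargeCount (L + 1) (m + t) (t + 1) := by
  have hinj := pushEven_injective
  have hne := pushEven_ne_zero
  refine chargeCount_le_chargeCount (fun X => insert 0 (X.image pushEven))
    (insert_zero_image_injective hinj hne).injOn ?_ ?_ ?_
  · rintro X rfl
    exact card_insert_zero_image hinj hne X
  · rintro X - rfl
    simp only [betaSize_insert_zero_image hinj hne, pushEven_sub_sub_one, charge,
      add_sub_cancel_left]
  · rintro X - rfl
    rw [charge_insert_zero_image hinj hne, charge, add_comm]
    exact congrArg (· + 1) (Finset.sum_congr rfl fun x _ => neg_one_pow_congr even_pushEven)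

lemma chargeCount_le_add (L j : ℕ) (m t : ℤ) :
    chargeCount L m t ≤ chargeCount (L + j) (m + j * t + j.choose 2) (t + j) := by
  induction j with
  | zero => simp
  | succ j ih =>
    refine ih.trans ((chargeCount_le_succ _ _ _).trans_eq ?_)
    rw [Nat.choose_succ_succ' j 1, Nat.choose_one_right, one_add_one_eq_two]
    push_cast
    congr 1 <;> ring

/-- Raises the largest element of `X` by `s`. -/
def raiseMax (s : ℕ) (X : Finset ℕ) : Finset ℕ :=
  insert (X.sup id + s) (X.erase (X.sup id))

lemma raiseMax_insert_max {s a : ℕ} {Y : Finset ℕ} (hmax : ∀ x ∈ Y, x < a) :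
    raiseMax s (insert a Y) = insert (a + s) Y := by
  have hsup : (insert a Y).sup id = a := by
    rw [Finset.sup_insert, id, sup_eq_left]
    exact Finset.sup_le fun x hx => (hmax x hx).le
  rw [raiseMax, hsup, Finset.erase_insert fun ha => lt_irrefl a (hmax a ha)]

lemma exists_insert_max_eq {X : Finset ℕ} (hX : X.Nonempty) :
    ∃ a Y, (∀ x ∈ Y, x < a) ∧ X = insert a Y := by
  induction X using Finset.induction_on_max with
  | empty => exact absurd hX Finset.not_nonempty_empty
  | insert a Y hmax _ => exact ⟨a, Y, hmax, rfl⟩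

lemma raiseMax_injOn (s : ℕ) : Set.InjOn (raiseMax s) {X | X.Nonempty} := by
  intro X hX X' hX' h
  obtain ⟨a, Y, hY, rfl⟩ := exists_insert_max_eq hX
  obtain ⟨a', Y', hY', rfl⟩ := exists_insert_max_eq hX'
  rw [raiseMax_insert_max hY, raiseMax_insert_max hY'] at h
  have haa' : a = a' := by
    have ha : a + s ∈ insert (a' + s) Y' := h ▸ Finset.mem_insert_self ..
    have ha' : a' + s ∈ insert (a + s) Y := h ▸ Finset.mem_insert_self ..
    rcases Finset.mem_insert.1 ha with heq | ha
    · omega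
    rcases Finset.mem_insert.1 ha' with heq | ha'
    · omega
    have := hY' _ ha
    have := hY _ ha'
    omega
  subst haa'
  have hnot {Z : Finset ℕ} (hZ : ∀ x ∈ Z, x < a) : a + s ∉ Z := fun ha => by
    have := hZ _ ha
    omega
  rw [← Finset.erase_insert (hnot hY), h, Finset.erase_insert (hnot hY')]

lemma chargeCount_le_add_two_mul_size {L : ℕ} (hL : 0 < L) (s : ℕ) (m t : ℤ) :
    chargeCount L m t ≤ chargeCount L (m + 2 * s) t := by
  have hne (X : Finset ℕ) (hX : X.card = L) : X.Nonempty := Finset.card_pos.1 (hX ▸ hL)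
  refine chargeCount_le_chargeCount (raiseMax (2 * s)) ((raiseMax_injOn _).mono hne) ?_ ?_ ?_
  all_goals
    intro X hX
    obtain ⟨a, Y, hmax, rfl⟩ := exists_insert_max_eq (hne X hX)
    have ha : a ∉ Y := fun ha => lt_irrefl a (hmax a ha)
    have has : a + 2 * s ∉ Y := fun ha => by have := hmax _ ha; omega
    have hcard : (insert a Y).card = _ := Finset.card_insert_of_notMem ha
    have hcard_raise : (insert (a + 2 * s) Y).card = _ := Finset.card_insert_of_notMem has
    rw [raiseMax_insert_max hmax]
  · rw [hcard_raise, ← hcard, hX]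
  · rintro -
    have hsize := betaSize_add_choose_two (insert a Y)
    have hsize_raise := betaSize_add_choose_two (insert (a + 2 * s) Y)
    rw [Finset.sum_insert ha, hcard] at hsize
    rw [Finset.sum_insert has, hcard_raise] at hsize_raise
    omega
  · rintro rfl
    simp [charge, ha, has, pow_add, pow_mul]

lemma chargeCount_le_add_four_mul {K B σ i : ℕ} (hi : i < K) (hσ : 2 * K * B + 4 * K ^ 2 ≤ σ)
    (L : ℕ) (m : ℤ) {t : ℤ} (ht : |t| ≤ B) :
    chargeCount L m t ≤ chargeCount (L + 4 * K) (m + 2 * σ) (t + 4 * i) := by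
  obtain ⟨c, hc⟩ : ∃ c : ℤ, c = i * (2 * t + (4 * i - 1)) := ⟨_, rfl⟩
  have hchoose : (((4 * i).choose 2 : ℕ) : ℤ) = 2 * (i * (4 * i - 1)) := by
    have := two_mul_choose_two_cast (4 * i)
    push_cast at this
    linarith
  have hcσ : c ≤ σ := by
    have hfactor : 2 * t + (4 * i - 1) ≤ 2 * B + 4 * K := by
      have := le_abs_self t
      omega
    calc c ≤ i * (2 * B + 4 * K) := hc ▸ mul_le_mul_of_nonneg_left hfactor i.cast_nonneg
      _ ≤ K * (2 * B + 4 * K) := by gcongr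
      _ ≤ σ := by
        zify at hσ
        linarith
  have hpush := chargeCount_le_add L (4 * i) m t
  have hlengthen := chargeCount_le_add_two_mul_card (L + 4 * i) (2 * (K - i))
    (m + (4 * i : ℕ) * t + (4 * i).choose 2) (t + (4 * i : ℕ))
  have hraise := chargeCount_le_add_two_mul_size (L := L + 4 * i + 2 * (2 * (K - i)))
    (by omega) (σ - c).toNat (m + (4 * i : ℕ) * t + (4 * i).choose 2) (t + (4 * i : ℕ))
  refine ((hpush.trans hlengthen).trans hraise).trans_eq ?_
  congr 1
  · omega
  · rw [Int.toNat_of_nonneg (by omega), hchoose, hc]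
    push_cast
    ring

lemma mul_chargeCount_le {K B σ : ℕ} (hσ : 2 * K * B + 4 * K ^ 2 ≤ σ) (L m : ℕ) {t : ℤ}
    (ht : |t| ≤ B) :
    K * chargeCount L m t ≤ Fintype.card (m + 2 * σ).Partition := by
  have hinj : Function.Injective fun i : ℕ => t + 4 * i := fun i j hij => by
    simp only at hij
    omega
  calc K * chargeCount L m t = ∑ _i ∈ Finset.range K, chargeCount L m t := by simp
    _ ≤ ∑ i ∈ Finset.range K, chargeCount (L + 4 * K) (m + 2 * σ : ℕ) (t + 4 * i) :=
      Finset.sum_le_sum fun i hi => by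
        exact_mod_cast chargeCount_le_add_four_mul (Finset.mem_range.1 hi) hσ L m ht
    _ = ∑ u ∈ (Finset.range K).image fun i : ℕ => t + 4 * i,
        chargeCount (L + 4 * K) (m + 2 * σ : ℕ) u := (Finset.sum_image hinj.injOn).symm
    _ ≤ Fintype.card (m + 2 * σ).Partition := sum_chargeCount_le ..

lemma card_parts_le {n : ℕ} (p : n.Partition) : p.parts.card ≤ n := by
  simpa [p.parts_sum] using Multiset.card_nsmul_le_sum (a := 1) fun x hx => p.parts_pos hx

lemma card_charge_eq_le_chargeCount (m : ℕ) (t : ℤ) :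
    (Finset.univ.filter fun p : m.Partition => charge (betaSet p.parts m) = t).card ≤
      chargeCount m m t := by
  have hpos (p : m.Partition) : ∀ i ∈ p.parts, 0 < i := fun _ => p.parts_pos
  refine Finset.card_le_card_of_injOn (fun p => betaSet p.parts m) (fun p hp => ?_)
    fun p _ p' _ (h : betaSet p.parts m = betaSet p'.parts m) => Nat.Partition.ext ?_
  · refine Finset.mem_filter.2 ⟨mem_betaSets.2 ⟨card_betaSet .., ?_⟩, (Finset.mem_filter.1 hp).2⟩
    rw [betaSize_betaSet (hpos p) (card_parts_le p), p.parts_sum]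
  · rw [← betaParts_betaSet (hpos p) (card_parts_le p), h,
      betaParts_betaSet (hpos p') (card_parts_le p')]

/-- The partitions of `m` in which fewer than `V` of the possible `m / 2` even hooks are missing. -/
def smallDefect (m V : ℕ) : Finset m.Partition :=
  Finset.univ.filter fun p => evenHookDefect p.parts < V

-- Small defect means small charge, and each of the few small charges is rare.
lemma mul_card_smallDefect_le {K V σ m : ℕ} (hσ : 8 * K * V + 4 * K ^ 2 ≤ σ) :
    K * (smallDefect m V).card ≤ (8 * V + 1) * Fintype.card (m + 2 * σ).Partition := by
  have hmaps (p) (hp : p ∈ smallDefect m V) :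
      charge (betaSet p.parts m) ∈ Finset.Icc (-(4 * V : ℤ)) (4 * V) :=
    Finset.mem_Icc.2 (abs_le.1 (abs_charge_le_of_evenHookDefect_lt (fun _ => p.parts_pos)
      (card_parts_le p) (Finset.mem_filter.1 hp).2))
  have hfibre (t) (ht : t ∈ Finset.Icc (-(4 * V : ℤ)) (4 * V)) :
      K * ((smallDefect m V).filter fun p => charge (betaSet p.parts m) = t).card ≤
        Fintype.card (m + 2 * σ).Partition := by
    refine (Nat.mul_le_mul_left K ?_).trans (mul_chargeCount_le (K := K) (B := 4 * V) (σ := σ)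
      (by linarith) m m (by push_cast; exact abs_le.2 (Finset.mem_Icc.1 ht)))
    exact (Finset.card_le_card (Finset.filter_subset_filter _ (Finset.subset_univ _))).trans
      (card_charge_eq_le_chargeCount m t)
  rw [Finset.card_eq_sum_card_fiberwise hmaps, Finset.mul_sum]
  refine (Finset.sum_le_card_nsmul _ _ _ hfibre).trans_eq ?_
  rw [Int.card_Icc, smul_eq_mul]
  congr 1
  omega

/-! ### Growth of the partition numbers -/

/-- Adds ones to the positive parts `M` to obtain a partition of `n`; a default value if `M` has a
part `0` or sums to more than `n`. -/
def padOnes (n : ℕ) (M : Multiset ℕ) : n.Partition :=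
  if h : (∀ i ∈ M, 0 < i) ∧ M.sum ≤ n then
    ⟨M + Multiset.replicate (n - M.sum) 1, by
      intro i hi
      rcases Multiset.mem_add.1 hi with hi | hi
      · exact h.1 i hi
      · exact (Multiset.eq_of_mem_replicate hi).symm ▸ one_pos, by
      simpa using Nat.add_sub_of_le h.2⟩
  else default

lemma parts_padOnes {n : ℕ} {M : Multiset ℕ} (hpos : ∀ i ∈ M, 0 < i) (hsum : M.sum ≤ n) :
    (padOnes n M).parts = M + Multiset.replicate (n - M.sum) 1 := by
  rw [padOnes, dif_pos ⟨hpos, hsum⟩]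

lemma card_le_count_one_le (m s : ℕ) :
    (Finset.univ.filter fun p : (m + s).Partition => s ≤ p.parts.count 1).card ≤
      Fintype.card m.Partition := by
  have hsubset : (Finset.univ.filter fun p : (m + s).Partition => s ≤ p.parts.count 1) ⊆
      Finset.univ.image fun p : m.Partition => padOnes (m + s) p.parts := by
    intro p hp
    have hones : Multiset.replicate s 1 ≤ p.parts :=
      Multiset.le_count_iff_replicate_le.1 (Finset.mem_filter.1 hp).2
    have hpos : ∀ i ∈ p.parts - Multiset.replicate s 1, 0 < i := fun i hi =>
      p.parts_pos (Multiset.mem_of_le (Multiset.sub_le_self _ _) hi)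
    have hsum : (p.parts - Multiset.replicate s 1).sum = m := by
      have := congrArg Multiset.sum (Multiset.sub_add_cancel hones)
      simpa [p.parts_sum] using this
    refine Finset.mem_image.2 ⟨⟨_, hpos _, hsum⟩, Finset.mem_univ _, Nat.Partition.ext ?_⟩
    rw [parts_padOnes hpos (by omega), hsum, Nat.add_sub_cancel_left, Multiset.sub_add_cancel hones]
  exact (Finset.card_le_card hsubset).trans Finset.card_image_le

lemma parts_padOnes_erase {n v : ℕ} (p : n.Partition) (hv : v ∈ p.parts) :
    (padOnes n (p.parts.erase v)).parts = p.parts.erase v + Multiset.replicate v 1 := by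
  have hsum := Multiset.sum_erase hv
  rw [p.parts_sum] at hsum
  rw [parts_padOnes (fun i hi => p.parts_pos (Multiset.mem_of_mem_erase hi)) (by omega)]
  congr 2
  omega

lemma eq_of_padOnes_erase_eq {n v v' : ℕ} {p p' : n.Partition}
    (hv : v ∈ p.parts.toFinset.erase 1) (hv' : v' ∈ p'.parts.toFinset.erase 1)
    (hcount : p.parts.count 1 = p'.parts.count 1)
    (h : padOnes n (p.parts.erase v) = padOnes n (p'.parts.erase v')) : v = v' ∧ p = p' := by
  obtain ⟨hv1, hv⟩ := Finset.mem_erase.1 hv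
  obtain ⟨hv1', hv'⟩ := Finset.mem_erase.1 hv'
  rw [Multiset.mem_toFinset] at hv hv'
  replace h := congrArg Nat.Partition.parts h
  rw [parts_padOnes_erase p hv, parts_padOnes_erase p' hv'] at h
  obtain rfl : v = v' := by
    have hones := congrArg (Multiset.count 1) h
    simp only [Multiset.count_add, Multiset.count_erase_of_ne hv1.symm,
      Multiset.count_erase_of_ne hv1'.symm, Multiset.count_replicate_self, hcount] at hones
    omega
  refine ⟨rfl, Nat.Partition.ext ?_⟩
  rw [← Multiset.cons_erase hv, add_right_cancel h, Multiset.cons_erase hv']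

-- Splitting a part `v ≠ 1` into ones is undone by knowing the former number of ones.
lemma card_count_one_lt_mul_le (n s D : ℕ) :
    (Finset.univ.filter fun p : n.Partition =>
      p.parts.count 1 < s ∧ D ≤ (p.parts.toFinset.erase 1).card).card * D ≤
      Fintype.card n.Partition * s := by
  set E := Finset.univ.filter fun p : n.Partition =>
    p.parts.count 1 < s ∧ D ≤ (p.parts.toFinset.erase 1).card
  calc E.card * D ≤ ∑ p ∈ E, (p.parts.toFinset.erase 1).card := by
        rw [← smul_eq_mul]
        exact Finset.card_nsmul_le_sum _ _ _ fun p hp => (Finset.mem_filter.1 hp).2.2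
    _ = (E.sigma fun p => p.parts.toFinset.erase 1).card := (Finset.card_sigma ..).symm
    _ ≤ ((Finset.univ : Finset n.Partition) ×ˢ Finset.range s).card := by
        refine Finset.card_le_card_of_injOn
          (fun a => (padOnes n (a.1.parts.erase a.2), a.1.parts.count 1)) ?_ ?_
        · rintro ⟨p, v⟩ ha
          have hp := (Finset.mem_sigma.1 ha).1
          exact Finset.mem_product.2
            ⟨Finset.mem_univ _, Finset.mem_range.2 (Finset.mem_filter.1 hp).2.1⟩
        · rintro ⟨p, v⟩ ha ⟨p', v'⟩ ha' h
          obtain ⟨hpad, hcount⟩ := Prod.ext_iff.1 h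
          obtain ⟨rfl, rfl⟩ := eq_of_padOnes_erase_eq (Finset.mem_sigma.1 ha).2
            (Finset.mem_sigma.1 ha').2 hcount hpad
          rfl
    _ = Fintype.card n.Partition * s := by
        rw [Finset.card_product, Finset.card_range, Finset.card_univ]

/-- Lists the distinct elements of `M` with their multiplicities, padded by zeros or truncated to
length `D`. -/
noncomputable def sizesAndCounts (D : ℕ) (M : Multiset ℕ) (i : Fin D) : ℕ × ℕ :=
  (M.toFinset.toList.getD i 0, M.count (M.toFinset.toList.getD i 0))

lemma sizesAndCounts_injOn (D : ℕ) :
    Set.InjOn (sizesAndCounts D) {M | M.toFinset.card ≤ D} := by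
  have hle {M M' : Multiset ℕ} (hM : M.toFinset.card ≤ D)
      (h : sizesAndCounts D M = sizesAndCounts D M') : M ≤ M' := by
    refine Multiset.le_iff_count.2 fun v => ?_
    by_cases hv : v ∈ M
    · obtain ⟨i, hi, rfl⟩ :=
        List.mem_iff_getElem.1 (Finset.mem_toList.2 (Multiset.mem_toFinset.2 hv))
      have hiD : i < D := by
        rw [Finset.length_toList] at hi
        omega
      have hpair := congrFun h ⟨i, hiD⟩
      simp only [sizesAndCounts, List.getD_eq_getElem _ 0 hi, Prod.mk.injEq] at hpair
      exact (hpair.2.trans (congrArg M'.count hpair.1.symm)).le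
    · rw [Multiset.count_eq_zero_of_notMem hv]
      exact Nat.zero_le _
  exact fun M hM M' hM' h => (hle hM h).antisymm (hle hM' h.symm)

lemma fst_sizesAndCounts_le (D : ℕ) (M : Multiset ℕ) (i : Fin D) :
    (sizesAndCounts D M i).1 ≤ M.sum := by
  rw [sizesAndCounts]
  obtain hi | hi := lt_or_ge (i : ℕ) M.toFinset.toList.length
  · rw [List.getD_eq_getElem _ 0 hi]
    exact Multiset.le_sum_of_mem
      (Multiset.mem_toFinset.1 (Finset.mem_toList.1 (List.getElem_mem hi)))
  · rw [List.getD_eq_default _ _ hi]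
    exact Nat.zero_le _

lemma card_card_toFinset_le_le (n D : ℕ) :
    (Finset.univ.filter fun p : n.Partition => p.parts.toFinset.card ≤ D).card ≤
      (n + 1) ^ (2 * D) := by
  have hcard : (Fintype.piFinset fun _ : Fin D => Finset.range (n + 1) ×ˢ Finset.range (n + 1)).card
      = (n + 1) ^ (2 * D) := by
    simp [pow_mul, sq]
  rw [← hcard]
  refine Finset.card_le_card_of_injOn (fun p => sizesAndCounts D p.parts) (fun p _ => ?_)
    fun p hp p' hp' h => Nat.Partition.ext (sizesAndCounts_injOn D
      (Finset.mem_filter.1 hp).2 (Finset.mem_filter.1 hp').2 h)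
  refine Finset.mem_coe.2 (Fintype.mem_piFinset.2 fun i => Finset.mem_product.2 ⟨?_, ?_⟩)
  · have := fst_sizesAndCounts_le D p.parts i
    rw [p.parts_sum] at this
    exact Finset.mem_range.2 (Nat.lt_succ_of_le this)
  · exact Finset.mem_range.2
      (Nat.lt_succ_of_le ((Multiset.count_le_card _ _).trans (card_parts_le p)))

lemma two_pow_le_card_partition {n r : ℕ} (h : (r + 1) * r ≤ n) :
    2 ^ r ≤ Fintype.card n.Partition := by
  have hparts (S : Finset ℕ) (hS : S ∈ (Finset.Icc 2 (r + 1)).powerset) :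
      (padOnes n S.val).parts.filter (· ≠ 1) = S.val := by
    rw [Finset.mem_powerset] at hS
    have hsum : S.val.sum ≤ n := by
      have hle : ∑ x ∈ S, x ≤ S.card * (r + 1) :=
        Finset.sum_le_card_nsmul S (fun x => x) (r + 1) fun x hx => (Finset.mem_Icc.1 (hS hx)).2
      have hcard : S.card ≤ r := by simpa using Finset.card_le_card hS
      calc S.val.sum = ∑ x ∈ S, x := (congrArg Multiset.sum (Multiset.map_id' _)).symm
        _ ≤ n := by nlinarith
    have htwo (x) (hx : x ∈ S.val) : 2 ≤ x := (Finset.mem_Icc.1 (hS hx)).1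
    rw [parts_padOnes (fun x hx => two_pos.trans_le (htwo x hx)) hsum, Multiset.filter_add,
      Multiset.filter_eq_self.2 fun x hx => by have := htwo x hx; omega,
      Multiset.filter_eq_nil.2 fun x hx => not_not.2 (Multiset.eq_of_mem_replicate hx), add_zero]
  have hinj : Set.InjOn (fun S : Finset ℕ => padOnes n S.val) (Finset.Icc 2 (r + 1)).powerset := by
    intro S hS T hT (hST : padOnes n S.val = padOnes n T.val)
    exact Finset.val_injective (by rw [← hparts S hS, hST, hparts T hT])
  simpa using Finset.card_le_card_of_injOn _ (fun _ _ => Finset.mem_univ _) hinj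

lemma card_partition_add_le {m s r : ℕ} (hr : (r + 1) * r ≤ m + s)
    (h : 4 * (m + s + 1) ^ (8 * s) ≤ 2 ^ r) :
    Fintype.card (m + s).Partition ≤ 2 * Fintype.card m.Partition := by
  obtain rfl | hs := Nat.eq_zero_or_pos s
  · exact Nat.le_mul_of_pos_left _ two_pos
  have hmany := card_le_count_one_le m s
  have hfew := card_count_one_lt_mul_le (m + s) s (4 * s)
  have hsizes := card_card_toFinset_le_le (m + s) (4 * s)
  have hlower := two_pow_le_card_partition hr
  set A := Finset.univ.filter fun p : (m + s).Partition => s ≤ p.parts.count 1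
  set E := Finset.univ.filter fun p : (m + s).Partition =>
    p.parts.count 1 < s ∧ 4 * s ≤ (p.parts.toFinset.erase 1).card
  set G := Finset.univ.filter fun p : (m + s).Partition => p.parts.toFinset.card ≤ 4 * s
  have hcover : Finset.univ ⊆ A ∪ (E ∪ G) := fun p _ => by
    have := Finset.pred_card_le_card_erase (s := p.parts.toFinset) (a := 1)
    simp only [A, E, G, Finset.mem_union, Finset.mem_filter, Finset.mem_univ, true_and]
    omega
  have htotal : Fintype.card (m + s).Partition ≤ A.card + (E.card + G.card) :=
    (Finset.card_le_card hcover).trans ((Finset.card_union_le ..).trans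
      (Nat.add_le_add_left (Finset.card_union_le ..) _))
  have hquarter : 4 * E.card ≤ Fintype.card (m + s).Partition :=
    Nat.le_of_mul_le_mul_right (by linarith) hs
  rw [← mul_assoc, show 2 * 4 = 8 from rfl] at hsizes
  omega

lemma eventually_eval_le_two_pow (P : Polynomial ℕ) :
    ∀ᶠ l : ℕ in Filter.atTop, P.eval l ≤ 2 ^ l := by
  have hlittle : (fun l : ℕ => ((P.eval l : ℕ) : ℝ)) =o[Filter.atTop] fun l => (2 : ℝ) ^ l := by
    simp only [Polynomial.eval_eq_sum_range, Nat.cast_sum, Nat.cast_mul, Nat.cast_pow]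
    refine Asymptotics.IsLittleO.fun_sum fun i _ => ?_
    exact (isLittleO_pow_const_const_pow_of_one_lt i one_lt_two).const_mul_left _
  filter_upwards [hlittle.def one_pos] with l hl
  rw [one_mul, Real.norm_natCast, Real.norm_of_nonneg (by positivity)] at hl
  exact_mod_cast hl

lemma tendsto_log_two : Filter.Tendsto (Nat.log 2) Filter.atTop Filter.atTop :=
  Filter.tendsto_atTop_atTop.2 fun l => ⟨2 ^ l, fun _ => Nat.le_log_of_pow_le one_lt_two⟩

lemma eventually_eval_log_le (P : Polynomial ℕ) :
    ∀ᶠ m : ℕ in Filter.atTop, P.eval (Nat.log 2 m) ≤ m := by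
  filter_upwards [tendsto_log_two.eventually (eventually_eval_le_two_pow P),
    Filter.eventually_ne_atTop 0] with m hP hm
  exact hP.trans (Nat.pow_log_le_self 2 hm)

lemma eventually_card_partition_add_le (P : Polynomial ℕ) :
    ∀ᶠ m : ℕ in Filter.atTop, ∀ s ≤ P.eval (Nat.log 2 m),
      Fintype.card (m + s).Partition ≤ 2 * Fintype.card m.Partition := by
  let R : Polynomial ℕ := 2 + (Polynomial.X + 2) * (8 * P)
  filter_upwards [eventually_eval_log_le P, eventually_eval_log_le ((R + 1) * R)] with m hP hR s hs
  have hm : m + s + 1 ≤ 2 ^ (Nat.log 2 m + 2) := by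
    have := Nat.lt_pow_succ_log_self one_lt_two m
    rw [pow_succ]
    omega
  refine card_partition_add_le (r := R.eval (Nat.log 2 m)) ?_ ?_
  · rw [Polynomial.eval_mul, Polynomial.eval_add, Polynomial.eval_one] at hR
    omega
  · calc 4 * (m + s + 1) ^ (8 * s)
        ≤ 2 ^ 2 * (2 ^ (Nat.log 2 m + 2)) ^ (8 * P.eval (Nat.log 2 m)) := by
          gcongr
          · norm_num
          · exact Nat.one_le_two_pow
      _ = 2 ^ R.eval (Nat.log 2 m) := by
        rw [← pow_mul, ← pow_add]
        simp [R]

lemma smallDefect_mono (m : ℕ) : Monotone (smallDefect m) := fun _ _ hV =>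
  Finset.monotone_filter_right _ fun _ _ hp => hp.trans_le hV

lemma eventually_mul_card_smallDefect_le (c C : ℕ) :
    ∀ᶠ m : ℕ in Filter.atTop, ∀ V ≤ Nat.log 2 m + C,
      c * (smallDefect m V).card ≤ Fintype.card m.Partition := by
  let W : Polynomial ℕ := Polynomial.X + Polynomial.C C
  let K : Polynomial ℕ := Polynomial.C (2 * c) * (8 * W + 1)
  let S : Polynomial ℕ := 8 * K * W + 4 * K ^ 2
  filter_upwards [eventually_card_partition_add_le (2 * S)] with m hgrowth V hV
  obtain ⟨w, hw⟩ : ∃ w, w = Nat.log 2 m + C := ⟨_, rfl⟩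
  obtain ⟨κ, hκ⟩ : ∃ κ, κ = 2 * c * (8 * w + 1) := ⟨_, rfl⟩
  have hS : (2 * S).eval (Nat.log 2 m) = 2 * (8 * κ * w + 4 * κ ^ 2) := by
    simp [S, K, W, hκ, hw]
  have hcount : κ * (smallDefect m w).card ≤ (8 * w + 1) * (2 * Fintype.card m.Partition) :=
    (mul_card_smallDefect_le le_rfl).trans (Nat.mul_le_mul_left _ (hgrowth _ hS.ge))
  have hcard : c * (smallDefect m w).card ≤ Fintype.card m.Partition := by
    refine Nat.le_of_mul_le_mul_left (c := 2 * (8 * w + 1)) ?_ (by positivity)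
    rw [hκ] at hcount
    linarith
  exact (Nat.mul_le_mul_left c (Finset.card_le_card (smallDefect_mono m (hV.trans hw.ge)))).trans
    hcard

lemma eventually_card_smallDefect_lt {ε : ℝ} (hε : 0 < ε) (C : ℕ) :
    ∀ᶠ m : ℕ in Filter.atTop, ∀ V ≤ Nat.log 2 m + C,
      ((smallDefect m V).card : ℝ) < ε * Fintype.card m.Partition := by
  obtain ⟨c, hc⟩ := exists_nat_gt (1 / ε)
  filter_upwards [eventually_mul_card_smallDefect_le c C] with m hm V hV
  have hcard : (c : ℝ) * (smallDefect m V).card ≤ Fintype.card m.Partition :=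
    mod_cast hm V hV
  have hpos : (0 : ℝ) < Fintype.card m.Partition := mod_cast Fintype.card_pos
  rw [div_lt_iff₀ hε] at hc
  by_contra! hge
  nlinarith

/-! ### Families of partitions of prescribed sizes -/

lemma card_piFinset_update_univ_mul_card {ι : Type*} [Fintype ι] [DecidableEq ι] {β : ι → Type*}
    [∀ i, Fintype (β i)] (i : ι) (B : Finset (β i)) :
    (Fintype.piFinset (Function.update (fun _ => Finset.univ) i B)).card * Fintype.card (β i) =
      B.card * Fintype.card (∀ j, β j) := by
  rw [Fintype.card_piFinset, Fintype.card_pi, ← Finset.mul_prod_erase _ _ (Finset.mem_univ i),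
    ← Finset.mul_prod_erase _ (fun j => Fintype.card (β j)) (Finset.mem_univ i),
    Function.update_self, Finset.prod_congr rfl fun j hj => by
      rw [Function.update_of_ne (Finset.ne_of_mem_erase hj), Finset.card_univ]]
  ring

section HasSizes

variable {α : Type*} {s : α →₀ ℕ} {μ : α →₀ Multiset ℕ}

/-- `μ` assigns to each `a` a partition of `s a`, given by its multiset of parts. -/
def HasSizes (s : α →₀ ℕ) (μ : α →₀ Multiset ℕ) : Prop :=
  (∀ a, ∀ m ∈ μ a, 0 < m) ∧ ∀ a, (μ a).sum = s a

namespace HasSizes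

/-- The value of `μ` at `a` as a partition in the sense of Mathlib. -/
def partition (h : HasSizes s μ) (a : α) : (s a).Partition :=
  ⟨μ a, fun hi => h.1 a _ hi, h.2 a⟩

lemma support_eq (h : HasSizes s μ) : μ.support = s.support := by
  ext a
  rw [Finsupp.mem_support_iff, Finsupp.mem_support_iff, not_iff_not, ← h.2 a]
  refine ⟨fun ha => ha ▸ rfl, fun ha => Multiset.eq_zero_of_forall_notMem fun m hm => ?_⟩
  exact (h.1 a m hm).ne' (Multiset.sum_eq_zero_iff.1 ha m hm)

end HasSizes

/-- A family of partitions of prescribed sizes amounts to a choice of a partition of `s a` for each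
`a` in the support of `s`. -/
noncomputable def hasSizesEquiv (s : α →₀ ℕ) :
    {μ // HasSizes s μ} ≃ ∀ a : s.support, (s a).Partition where
  toFun μ a := μ.2.partition a
  invFun π := by
    classical
    refine ⟨Finsupp.onFinset s.support
      (fun a => if ha : a ∈ s.support then (π ⟨a, ha⟩).parts else 0)
      fun a => not_imp_comm.1 fun ha => dif_neg ha, fun a => ?_, fun a => ?_⟩
    all_goals
      rw [Finsupp.onFinset_apply]
      split_ifs with ha
    · exact fun _ => (π ⟨a, ha⟩).parts_pos
    · simp
    · exact (π ⟨a, ha⟩).parts_sum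
    · exact (Finsupp.notMem_support_iff.1 ha).symm
  left_inv μ := by
    ext1
    ext1 a
    rw [Finsupp.onFinset_apply]
    split_ifs with ha
    · rfl
    · rw [← μ.2.support_eq] at ha
      exact (Finsupp.notMem_support_iff.1 ha).symm
  right_inv π := by
    ext1 a
    ext1
    exact dif_pos a.2

instance (s : α →₀ ℕ) : Finite {μ // HasSizes s μ} := Finite.of_equiv _ (hasSizesEquiv s).symm

lemma card_mul_card_partition_le {a : α} (ha : a ∈ s.support) (B : Finset (s a).Partition)
    {Q : (α →₀ Multiset ℕ) → Prop}
    (hQ : ∀ μ, Q μ → ∃ h : HasSizes s μ, h.partition a ∈ B) :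
    Nat.card {μ // Q μ} * Fintype.card (s a).Partition ≤
      B.card * Nat.card {μ // HasSizes s μ} := by
  classical
  let T : Finset (∀ b : s.support, (s b).Partition) :=
    Fintype.piFinset (Function.update (fun _ => Finset.univ) ⟨a, ha⟩ B)
  have hmem (μ : {μ // Q μ}) : hasSizesEquiv s ⟨μ, (hQ μ μ.2).1⟩ ∈ T := by
    refine Fintype.mem_piFinset.2 fun b => ?_
    obtain rfl | hb := eq_or_ne b ⟨a, ha⟩
    · rw [Function.update_self]
      exact (hQ μ μ.2).2
    · simp [hb]
  have hle : Nat.card {μ // Q μ} ≤ T.card := by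
    have hinj : Function.Injective fun μ : {μ // Q μ} => (⟨_, hmem μ⟩ : T) := fun μ ν h =>
      Subtype.ext (Subtype.mk.inj ((hasSizesEquiv s).injective (Subtype.mk.inj h)))
    simpa using Nat.card_le_card_of_injective _ hinj
  rw [Nat.card_congr (hasSizesEquiv s), Nat.card_eq_fintype_card (α := ∀ a : s.support, _)]
  exact (Nat.mul_le_mul_right _ hle).trans_eq
    (card_piFinset_update_univ_mul_card (β := fun b : s.support => (s b).Partition) ⟨a, ha⟩ B)

lemma card_div_card_hasSizes_lt {a : α} (ha : a ∈ s.support) {B : Finset (s a).Partition} {ε : ℝ}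
    (hB : B.card < ε * Fintype.card (s a).Partition) {Q : (α →₀ Multiset ℕ) → Prop}
    (hQ : ∀ μ, Q μ → ∃ h : HasSizes s μ, h.partition a ∈ B) :
    (Nat.card {μ // Q μ} : ℝ) / Nat.card {μ // HasSizes s μ} < ε := by
  have hle : (Nat.card {μ // Q μ} : ℝ) * Fintype.card (s a).Partition ≤
      B.card * Nat.card {μ // HasSizes s μ} := mod_cast card_mul_card_partition_le ha B hQ
  have hpos : (0 : ℝ) < Nat.card {μ // HasSizes s μ} := by
    have : Nonempty {μ // HasSizes s μ} := ⟨(hasSizesEquiv s).symm default⟩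
    exact_mod_cast Nat.card_pos
  have hpart : (0 : ℝ) < Fintype.card (s a).Partition := mod_cast Fintype.card_pos
  rw [div_lt_iff₀ hpos]
  refine lt_of_mul_lt_mul_right (hle.trans_lt ?_) hpart.le
  exact (mul_lt_mul_of_pos_right hB hpos).trans_eq (mul_right_comm ..)

end HasSizes

lemma isXn_and_sum_eq_iff_hasSizes {F : Type*} [Field F] {n : ℕ} {s : Polynomial F →₀ ℕ}
    (hs : ∀ f ∈ s.support, f.Monic ∧ Irreducible f ∧ f ≠ Polynomial.X)
    (hn : (s.sum fun f m => f.natDegree * m) = n) {μ : Polynomial F →₀ Multiset ℕ} :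
    (IsXn F n μ ∧ ∀ f, (μ f).sum = s f) ↔ HasSizes s μ := by
  refine ⟨fun h => ⟨h.1.2.1, h.2⟩, fun h => ⟨⟨h.support_eq ▸ hs, h.1, ?_⟩, h.2⟩⟩
  rw [← hn, Finsupp.sum, Finsupp.sum, h.support_eq]
  exact Finset.sum_congr rfl fun f _ => by rw [h.2 f, mul_comm]

/-! ### Linear factors -/

lemma padicValNat_descFactorial_le (p n k : ℕ) [hp : Fact p.Prime] :
    padicValNat p (n.descFactorial k) ≤ Nat.log p n + padicValNat p k.factorial := by
  obtain hnk | hkn := lt_or_ge n k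
  · simp [Nat.descFactorial_eq_zero_iff_lt.2 hnk]
  · have hchoose := Nat.factorization_choose_le_log (p := p) (n := n) (k := k)
    rw [Nat.factorization_def _ hp.out] at hchoose
    rw [Nat.descFactorial_eq_factorial_mul_choose,
      padicValNat.mul k.factorial_ne_zero (Nat.choose_pos hkn).ne']
    omega

lemma log_mul_le_log_add_log (b x y : ℕ) :
    Nat.log b (x * y) ≤ Nat.log b x + Nat.log b y + 1 := by
  obtain hb | hb := le_or_gt b 1
  · simp [Nat.log_of_left_le_one hb]
  refine Nat.lt_succ_iff.1 (Nat.log_lt_of_lt_pow' (Nat.succ_ne_zero _) ?_)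
  calc x * y < b ^ (Nat.log b x + 1) * b ^ (Nat.log b y + 1) :=
        Nat.mul_lt_mul'' (Nat.lt_pow_succ_log_self hb x) (Nat.lt_pow_succ_log_self hb y)
    _ = b ^ (Nat.log b x + Nat.log b y + 1 + 1) := by ring

section LinearFactors

variable {F : Type*} [Field F]

/-- The amount by which the total degree of `∏ f ^ s f` exceeds its number of factors. -/
noncomputable def degreeExcess (s : Polynomial F →₀ ℕ) : ℕ :=
  s.sum fun f m => (f.natDegree - 1) * m

lemma card_le_of_monic_of_natDegree_eq_one [Fintype F] {S : Finset (Polynomial F)}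
    (hmonic : ∀ f ∈ S, f.Monic) (hdeg : ∀ f ∈ S, f.natDegree = 1) :
    S.card ≤ Fintype.card F := by
  refine Finset.card_le_card_of_injOn (fun f => f.coeff 0) (fun _ _ => Finset.mem_univ _) ?_
  intro f hf g hg (hfg : f.coeff 0 = g.coeff 0)
  rw [(hmonic f hf).eq_X_add_C (hdeg f hf), (hmonic g hg).eq_X_add_C (hdeg g hg), hfg]

lemma sum_natDegree_mul_le_add_sum_linear (s : Polynomial F →₀ ℕ) :
    (s.sum fun f m => f.natDegree * m) ≤
      2 * degreeExcess s + ∑ f ∈ s.support with f.natDegree = 1, s f := by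
  rw [degreeExcess, Finsupp.sum, Finsupp.sum, Finset.mul_sum, Finset.sum_filter,
    ← Finset.sum_add_distrib]
  refine Finset.sum_le_sum fun f _ => ?_
  split_ifs with hf
  · simp [hf]
  · calc f.natDegree * s f ≤ 2 * (f.natDegree - 1) * s f := Nat.mul_le_mul_right _ (by omega)
      _ = 2 * ((f.natDegree - 1) * s f) + 0 := by ring

lemma exists_le_two_mul_card_mul [Fintype F] {s : Polynomial F →₀ ℕ}
    (hmonic : ∀ f ∈ s.support, f.Monic)
    (hexcess : 4 * degreeExcess s ≤ s.sum fun f m => f.natDegree * m) :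
    ∃ f, (s.sum fun f m => f.natDegree * m) ≤ 2 * Fintype.card F * s f := by
  have hsum := sum_natDegree_mul_le_add_sum_linear s
  set S := s.support.filter fun f => f.natDegree = 1
  obtain hS | hS := S.eq_empty_or_nonempty
  · rw [hS, Finset.sum_empty] at hsum
    exact ⟨0, by omega⟩
  obtain ⟨f, -, hmax⟩ := S.exists_max_image s hS
  have hlinear : ∑ g ∈ S, s g ≤ Fintype.card F * s f :=
    (Finset.sum_le_card_nsmul _ _ _ hmax).trans (Nat.mul_le_mul_right _
      (card_le_of_monic_of_natDegree_eq_one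
        (fun g hg => hmonic g (Finset.mem_filter.1 hg).1) fun g hg => (Finset.mem_filter.1 hg).2))
  exact ⟨f, by linarith⟩

lemma eventually_exists_large_apply [Fintype F] (k M : ℕ) :
    ∀ᶠ n : ℕ in Filter.atTop, ∀ s : Polynomial F →₀ ℕ,
      (∀ f ∈ s.support, f.Monic) → (s.sum fun f m => f.natDegree * m) = n →
      degreeExcess s < padicValNat 2 (n.descFactorial k) →
      ∃ f ∈ s.support, M ≤ s f ∧ padicValNat 2 (n.descFactorial k) ≤
        Nat.log 2 (s f) + (Nat.log 2 (2 * Fintype.card F) + 1 + padicValNat 2 k.factorial) := by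
  filter_upwards [eventually_eval_log_le
      (4 * (Polynomial.X + Polynomial.C (padicValNat 2 k.factorial))),
    Filter.eventually_gt_atTop (2 * Fintype.card F * M)] with n hlog hM s hmonic hn hexcess
  have hV := padicValNat_descFactorial_le 2 n k
  simp only [Polynomial.eval_mul, Polynomial.eval_add, Polynomial.eval_X, Polynomial.eval_C,
    Polynomial.eval_ofNat] at hlog
  obtain ⟨f, hf⟩ := exists_le_two_mul_card_mul hmonic (by omega)
  rw [hn] at hf
  have hlogf := (Nat.log_mono_right hf).trans (log_mul_le_log_add_log 2 _ _)
  have hMf : M < s f := Nat.lt_of_mul_lt_mul_left (hM.trans_le hf)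
  exact ⟨f, Finsupp.mem_support_iff.2 (Nat.ne_zero_of_lt hMf), hMf.le, by omega⟩

lemma degreeExcess_add_evenHookDefect_le {q n : ℕ} (hq : Odd q) (hq1 : 1 < q)
    {s : Polynomial F →₀ ℕ} {μ : Polynomial F →₀ Multiset ℕ} (hμ : IsXn F n μ)
    (hs : HasSizes s μ) (f : Polynomial F) :
    ((degreeExcess s + evenHookDefect (μ f) : ℕ) : ℤ) ≤ padicValRat 2 (dMu q n μ) := by
  refine le_trans ?_ (le_padicValRat_dMu hq hq1 hμ)
  have hdefect : evenHookDefect (μ f) ≤ ∑ g ∈ s.support, evenHookDefect (μ g) := by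
    by_cases hf : f ∈ s.support
    · exact Finset.single_le_sum (f := fun g => evenHookDefect (μ g)) (fun _ _ => Nat.zero_le _) hf
    · rw [← hs.support_eq, Finsupp.notMem_support_iff] at hf
      simp [hf, evenHookDefect]
  have hexcess : degreeExcess s = ∑ g ∈ s.support, (g.natDegree - 1) * (μ g).sum :=
    Finset.sum_congr rfl fun g _ => by rw [hs.2]
  rw [hs.support_eq, Finset.sum_add_distrib, ← hexcess]
  exact_mod_cast Nat.add_le_add_left hdefect _

end LinearFactors

theorem two_adic_fibrewise_proportion
    (q : ℕ) (hq : IsPrimePow q) (hodd : Odd q)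
    (F : Type*) [Field F] [Fintype F] (hFq : Fintype.card F = q)
    (k : ℕ) (hk : 0 < k) :
    ∀ ε : ℝ, 0 < ε → ∃ N : ℕ, ∀ n ≥ N,
      ∀ Fn : Polynomial F →₀ ℕ,
        (∀ f ∈ Fn.support, f.Monic ∧ Irreducible f ∧ f ≠ Polynomial.X) →
        (Fn.sum fun f m => f.natDegree * m) = n →
        (Nat.card {μ : Polynomial F →₀ Multiset ℕ //
              IsXn F n μ ∧ (∀ f : Polynomial F, (μ f).sum = Fn f) ∧
                padicValRat 2 (dMu q n μ) < (padicValNat 2 (Nat.descFactorial n k) : ℤ)} : ℝ) /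
            (Nat.card {μ : Polynomial F →₀ Multiset ℕ //
              IsXn F n μ ∧ (∀ f : Polynomial F, (μ f).sum = Fn f)} : ℝ) < ε := by
  intro ε hε
  let C := Nat.log 2 (2 * Fintype.card F) + 1 + padicValNat 2 k.factorial
  obtain ⟨M, hM⟩ := Filter.eventually_atTop.1 (eventually_card_smallDefect_lt hε C)
  obtain ⟨N, hN⟩ := Filter.eventually_atTop.1 (eventually_exists_large_apply (F := F) k M)
  refine ⟨N, fun n hn s hs hsum => ?_⟩
  simp only [← and_assoc, isXn_and_sum_eq_iff_hasSizes hs hsum]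
  set V := padicValNat 2 (n.descFactorial k)
  have hbound {μ} (hμ : HasSizes s μ ∧ padicValRat 2 (dMu q n μ) < V) (f : Polynomial F) :
      degreeExcess s + evenHookDefect (μ f) < V := by
    have hXn := ((isXn_and_sum_eq_iff_hasSizes hs hsum).2 hμ.1).1
    exact_mod_cast (degreeExcess_add_evenHookDefect_le hodd hq.one_lt hXn hμ.1 f).trans_lt hμ.2
  obtain hlarge | hsmall := le_or_gt V (degreeExcess s)
  · have : IsEmpty {μ // HasSizes s μ ∧ padicValRat 2 (dMu q n μ) < V} :=
      ⟨fun μ => hlarge.not_gt ((Nat.le_add_right ..).trans_lt (hbound μ.2 0))⟩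
    rwa [Nat.card_of_isEmpty, Nat.cast_zero, zero_div]
  · obtain ⟨f, hf, hMf, hV⟩ := hN n hn s (fun g hg => (hs g hg).1) hsum hsmall
    refine card_div_card_hasSizes_lt hf (hM _ hMf V hV) fun μ hμ => ⟨hμ.1, ?_⟩
    exact Finset.mem_filter.2
      ⟨Finset.mem_univ _, (Nat.le_add_left ..).trans_lt (hbound hμ f)⟩
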